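/- arXiv:1701.01835 — 9 statements merged into one kernel-verified Lean document; each statement's English description precedes it below -/
import Mathlib

section
/- Let α < 0 and let ψ̂ : [0,∞) → ℝ be a C² function such that ψ̂''(r) > 0 for all r > 0, lim_{r→∞} (ψ̂(r) − r)/r^α = 2^{(α+1)/2}, and lim_{r→∞} (ψ̂'(r) − 1)/r^{α−1} = α·2^{(α+1)/2}. Then lim_{r→∞} (ψ̂(r) − r·ψ̂'(r))/r^α = (1−α)·2^{(α+1)/2}, and moreover ψ̂(r) − r·ψ̂'(r) > 0 for every r ≥ 0. -/
open Real Filter Topology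

/-!
The quantity `ψ r - r * ψ' r` is the intercept at `0` of the tangent line to `ψ` at `r`. Since it is
also `(ψ r - r) - r * (ψ' r - 1)`, its asymptotics follow from those of `ψ - r` and `ψ' - 1`, and it
is positive for large `r`. Convexity makes the intercept antitone in `r`, which propagates
positivity from large `r` down to `0`.
-/

theorem tendsto_sub_mul_div_rpow {f f' : ℝ → ℝ} {m α a b : ℝ}
    (hf : Tendsto (fun r : ℝ => (f r - m * r) / r ^ α) atTop (𝓝 a))
    (hf' : Tendsto (fun r : ℝ => (f' r - m) / r ^ (α - 1)) atTop (𝓝 b)) :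
    Tendsto (fun r : ℝ => (f r - r * f' r) / r ^ α) atTop (𝓝 (a - b)) := by
  refine (hf.sub hf').congr' ?_
  filter_upwards [eventually_gt_atTop 0] with r hr
  have hpow : r ^ α ≠ 0 := (rpow_pos_of_pos hr α).ne'
  rw [rpow_sub_one hr.ne']
  field_simp
  ring

theorem antitoneOn_sub_mul_deriv {s : Set ℝ} {f : ℝ → ℝ} (hs : s ⊆ Set.Ici 0)
    (hf : ConvexOn ℝ s f) (hd : ∀ x ∈ s, 0 < x → DifferentiableAt ℝ f x) :
    AntitoneOn (fun x : ℝ => f x - x * deriv f x) s := by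
  refine antitoneOn_iff_forall_lt.2 fun x hx y hy hxy => ?_
  have hx0 : 0 ≤ x := hs hx
  have hdy : DifferentiableAt ℝ f y := hd y hy (hx0.trans_lt hxy)
  have tangent_le : f y - (y - x) * deriv f y ≤ f x := by
    have hslope := hf.slope_le_deriv hx hy hxy hdy
    rw [slope_def_field, div_le_iff₀ (sub_pos.2 hxy)] at hslope
    linarith
  have deriv_mono : x * deriv f x ≤ x * deriv f y := by
    rcases hx0.eq_or_lt with rfl | hx0
    · simp only [zero_mul, le_refl]
    · have hdx : DifferentiableAt ℝ f x := hd x hx hx0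
      exact mul_le_mul_of_nonneg_left
        ((hf.deriv_le_slope hx hy hxy hdx).trans (hf.slope_le_deriv hx hy hxy hdy)) hx0.le
  linarith

theorem velazquez_positivity_general {ψ : ℝ → ℝ} {m α a b : ℝ} (hab : b < a)
    (hconv : ConvexOn ℝ (Set.Ici 0) ψ) (hd : ∀ r : ℝ, 0 < r → DifferentiableAt ℝ ψ r)
    (hlim0 : Tendsto (fun r : ℝ => (ψ r - m * r) / r ^ α) atTop (𝓝 a))
    (hlim1 : Tendsto (fun r : ℝ => (deriv ψ r - m) / r ^ (α - 1)) atTop (𝓝 b)) :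
    Tendsto (fun r : ℝ => (ψ r - r * deriv ψ r) / r ^ α) atTop (𝓝 (a - b)) ∧
    ∀ r : ℝ, 0 ≤ r → 0 < ψ r - r * deriv ψ r := by
  have hlim := tendsto_sub_mul_div_rpow hlim0 hlim1
  refine ⟨hlim, fun r hr => ?_⟩
  obtain ⟨s, hs, hrs⟩ :=
    ((hlim.eventually_const_lt (sub_pos.2 hab)).and (eventually_gt_atTop r)).exists
  have hs0 : 0 < s := hr.trans_lt hrs
  have hpos : 0 < ψ s - s * deriv ψ s := (div_pos_iff_of_pos_right (rpow_pos_of_pos hs0 α)).1 hs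
  exact hpos.trans_le <|
    antitoneOn_sub_mul_deriv subset_rfl hconv (fun x _ => hd x) hr hs0.le hrs.le

/-- If `ψ̂` is `C²` on `[0,∞)` with `ψ̂'' > 0` on `(0,∞)` and the asymptotics
`(ψ̂(r) − r)/r^α → 2^((α+1)/2)` and `(ψ̂'(r) − 1)/r^(α−1) → α·2^((α+1)/2)` as `r → ∞`
(where `α < 0`), then `(ψ̂(r) − r·ψ̂'(r))/r^α → (1−α)·2^((α+1)/2)` and
`ψ̂(r) − r·ψ̂'(r) > 0` for every `r ≥ 0`. -/
theorem velazquez_positivity (α : ℝ) (hα : α < 0) (ψ : ℝ → ℝ)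
    (hC2 : ContDiff ℝ 2 ψ)
    (hconv : ∀ r : ℝ, 0 < r → 0 < deriv (deriv ψ) r)
    (hlim0 : Tendsto (fun r : ℝ => (ψ r - r) / r ^ α) atTop
      (𝓝 ((2 : ℝ) ^ ((α + 1) / 2))))
    (hlim1 : Tendsto (fun r : ℝ => (deriv ψ r - 1) / r ^ (α - 1)) atTop
      (𝓝 (α * (2 : ℝ) ^ ((α + 1) / 2)))) :
    Tendsto (fun r : ℝ => (ψ r - r * deriv ψ r) / r ^ α) atTop
      (𝓝 ((1 - α) * (2 : ℝ) ^ ((α + 1) / 2))) ∧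
    ∀ r : ℝ, 0 ≤ r → 0 < ψ r - r * deriv ψ r := by
  have hconvex : ConvexOn ℝ (Set.Ici 0) ψ :=
    (strictConvexOn_of_deriv2_pos (convex_Ici 0) hC2.continuous.continuousOn
      (by simpa using hconv)).convexOn
  have hc : α * (2 : ℝ) ^ ((α + 1) / 2) < 2 ^ ((α + 1) / 2) :=
    mul_lt_of_lt_one_left (by positivity) (hα.trans one_pos)
  rw [one_sub_mul]
  exact velazquez_positivity_general (m := 1) hc hconvex
    (fun r _ => hC2.differentiable two_ne_zero r) (by simpa only [one_mul] using hlim0) hlim1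
end

section
/- Let n ≥ 4 be an integer and let α = α(n) := (−(2n−3)+√(4n²−20n+17))/2. Let r₀ > 0 and let ψ : [r₀,∞) → ℝ be smooth with 0 < ψ(r) < r for all r ≥ r₀, satisfying ψ''(r)/(1+ψ'(r)²) + 2(n−1)(r·ψ'(r)+ψ(r))/(r²−ψ(r)²) = 0 on (r₀,∞), together with lim_{r→∞} ψ(r)/r^α = 1 and lim_{r→∞} ψ'(r)/r^{α−1} = α. For k > 0 define ψ_k(r) := k^{1/(1−α)} ψ(k^{−1/(1−α)} r). Then for every integer m ≥ 0 there exists a constant C > 0 such that |∂_r^m ψ_k(r)| ≤ C·k·r^{α−m} for all k > 0 and all r ≥ k^{1/(1−α)} r₀. -/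
open Real Filter Topology
open Asymptotics
open scoped ContDiff

/-!
Call `f` a symbol of order `β` if `f⁽ᵐ⁾(r) = O(r^(β - m))` as `r → ∞`. Symbols are closed under
sums, products, and reciprocals of symbols bounded below by a multiple of `r^β`. The profile
equation expresses `ψ''` rationally in `r`, `ψ` and `ψ'`, and its denominator `r² - ψ²` is
comparable to `r²` since `ψ = O(r^α)` with `α < 1`. Knowing `N + 1` derivatives of `ψ` thus controls
`N` derivatives of `ψ''`, that is `N + 2` derivatives of `ψ`, and bootstrapping starts from the two
given limits. Rescaling by `l = k^(1/(1-α))` multiplies a symbol bound of order `α` by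
`l^(1-α) = k`.
-/

theorem isBigO_rpow_rpow_atTop {β γ : ℝ} (h : β ≤ γ) :
    (fun r : ℝ => r ^ β) =O[atTop] fun r : ℝ => r ^ γ := by
  refine Eventually.isBigO ?_
  filter_upwards [eventually_ge_atTop 1] with r hr
  rw [norm_of_nonneg (by positivity)]
  exact rpow_le_rpow_of_exponent_le hr h

theorem isLittleO_rpow_rpow_atTop {β γ : ℝ} (h : β < γ) :
    (fun r : ℝ => r ^ β) =o[atTop] fun r : ℝ => r ^ γ := by
  have hpos : ∀ᶠ r : ℝ in atTop, 0 < r := eventually_gt_atTop 0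
  refine isLittleO_of_tendsto' (hpos.mono fun r hr h0 => absurd h0 (rpow_pos_of_pos hr γ).ne') ?_
  refine (tendsto_rpow_neg_atTop (sub_pos.mpr h)).congr' (hpos.mono fun r hr => ?_)
  rw [neg_sub, rpow_sub hr]

theorem isBigO_rpow_of_tendsto_div {f : ℝ → ℝ} {β l : ℝ}
    (h : Tendsto (fun r : ℝ => f r / r ^ β) atTop (𝓝 l)) : f =O[atTop] fun r : ℝ => r ^ β := by
  refine isBigO_of_div_tendsto_nhds ?_ l h
  filter_upwards [eventually_gt_atTop 0] with r hr h0
  exact absurd h0 (rpow_pos_of_pos hr β).ne'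

theorem isBigO_principal_Ici_of_isBigO_atTop {X E F : Type*} [LinearOrder X] [TopologicalSpace X]
    [CompactIccSpace X] [SeminormedAddCommGroup E] [NormedAddCommGroup F]
    {f : X → E} {g : X → F} {a : X} (h : f =O[atTop] g) (hf : ContinuousOn f (Set.Ici a))
    (hg : ContinuousOn g (Set.Ici a)) (hg_ne : ∀ r ∈ Set.Ici a, g r ≠ 0) :
    f =O[𝓟 (Set.Ici a)] g := by
  have : Nonempty X := ⟨a⟩
  obtain ⟨c, hc⟩ := h.bound
  obtain ⟨R, hR⟩ := eventually_atTop.mp hc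
  have hIci : f =O[𝓟 (Set.Ici R)] g := isBigO_principal.mpr ⟨c, hR⟩
  have hIcc : f =O[𝓟 (Set.Icc a R)] g :=
    ((hf.mono Set.Icc_subset_Ici_self).isBigO_principal isCompact_Icc (by simp)).trans
      ((hg.mono Set.Icc_subset_Ici_self).isBigO_rev_principal isCompact_Icc
        (fun r hr => hg_ne r hr.1) (1 : ℝ))
  refine (hIcc.sup hIci).mono ?_
  rw [sup_principal, principal_mono]
  exact fun r hr => (le_total r R).imp (⟨hr, ·⟩) id

theorem eventually_atTop_eventually_nhds {X : Type*} [LinearOrder X] [Nonempty X] [NoMaxOrder X]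
    [TopologicalSpace X] [ClosedIicTopology X] {p : X → Prop} (h : ∀ᶠ r in atTop, p r) :
    ∀ᶠ r in atTop, ∀ᶠ x in 𝓝 r, p x := by
  obtain ⟨R, hR⟩ := eventually_atTop.mp h
  filter_upwards [eventually_gt_atTop R] with r hr using eventually_of_mem (Ici_mem_nhds hr) hR

/-- Symbols of order `β` at infinity, with control of the first `N` derivatives. Differentiability
is required only near infinity, so that the reciprocal of a symbol can again be one. -/
structure IsSymbol {E : Type*} [NormedAddCommGroup E] [NormedSpace ℝ E]
    (N : ℕ) (β : ℝ) (f : ℝ → E) : Prop where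
  differentiableAt : ∀ m < N, ∀ᶠ r in atTop, DifferentiableAt ℝ (iteratedDeriv m f) r
  isBigO : ∀ m ≤ N, iteratedDeriv m f =O[atTop] fun r : ℝ => r ^ (β - m)

namespace IsSymbol

section NormedSpace

variable {E : Type*} [NormedAddCommGroup E] [NormedSpace ℝ E] {N : ℕ} {β γ : ℝ} {f g : ℝ → E}

theorem zero_iff : IsSymbol 0 β f ↔ f =O[atTop] fun r : ℝ => r ^ β := by
  refine ⟨fun hf => by simpa using hf.isBigO 0 le_rfl, fun hf => ⟨by simp, fun m hm => ?_⟩⟩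
  obtain rfl := Nat.le_zero.mp hm
  simpa using hf

theorem succ_iff : IsSymbol (N + 1) β f ↔ (∀ᶠ r in atTop, DifferentiableAt ℝ f r) ∧
    f =O[atTop] (fun r : ℝ => r ^ β) ∧ IsSymbol N (β - 1) (deriv f) := by
  have horder (m : ℕ) : β - (m + 1 : ℕ) = β - 1 - m := by push_cast; ring
  constructor
  · intro hf
    refine ⟨by simpa using hf.differentiableAt 0 N.succ_pos,
      by simpa using hf.isBigO 0 N.succ.zero_le, fun m hm => ?_, fun m hm => ?_⟩
    · rw [← iteratedDeriv_succ']
      exact hf.differentiableAt (m + 1) (Nat.succ_lt_succ hm)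
    · rw [← iteratedDeriv_succ', ← horder]
      exact hf.isBigO (m + 1) (Nat.succ_le_succ hm)
  · rintro ⟨hdiff, hbound, hderiv⟩
    refine ⟨?_, ?_⟩ <;> rintro (_ | m) hm
    · simpa using hdiff
    · rw [iteratedDeriv_succ']
      exact hderiv.differentiableAt m (Nat.lt_of_succ_lt_succ hm)
    · simpa using hbound
    · rw [iteratedDeriv_succ', horder]
      exact hderiv.isBigO m (Nat.le_of_succ_le_succ hm)

theorem eventually_differentiableAt (hf : IsSymbol (N + 1) β f) :
    ∀ᶠ r in atTop, DifferentiableAt ℝ f r :=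
  (succ_iff.mp hf).1

protected theorem deriv (hf : IsSymbol (N + 1) β f) : IsSymbol N (β - 1) (deriv f) :=
  (succ_iff.mp hf).2.2

theorem isBigO_self (hf : IsSymbol N β f) : f =O[atTop] fun r : ℝ => r ^ β := by
  simpa using hf.isBigO 0 N.zero_le

theorem of_succ (hf : IsSymbol (N + 1) β f) : IsSymbol N β f :=
  ⟨fun m hm => hf.differentiableAt m (hm.trans N.lt_succ_self),
    fun m hm => hf.isBigO m (hm.trans N.le_succ)⟩

theorem mono_order (hf : IsSymbol N β f) (h : β ≤ γ) : IsSymbol N γ f :=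
  ⟨hf.differentiableAt,
    fun m hm => (hf.isBigO m hm).trans (isBigO_rpow_rpow_atTop (sub_le_sub_right h _))⟩

theorem congr' (hf : IsSymbol N β f) (h : f =ᶠ[atTop] g) : IsSymbol N β g := by
  induction N generalizing β f g with
  | zero => exact zero_iff.mpr (hf.isBigO_self.congr' h .rfl)
  | succ N ih =>
    have hlocal : ∀ᶠ r in atTop, f =ᶠ[𝓝 r] g := eventually_atTop_eventually_nhds h
    refine succ_iff.mpr ⟨?_, hf.isBigO_self.congr' h .rfl,
      ih hf.deriv (hlocal.mono fun r hr => hr.deriv_eq)⟩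
    filter_upwards [hf.eventually_differentiableAt, hlocal]
      with r hr hfg using hr.congr_of_eventuallyEq hfg.symm

protected theorem const (N : ℕ) (c : E) : IsSymbol N 0 fun _ => c := by
  have hderiv (m : ℕ) : iteratedDeriv m (fun _ : ℝ => c) = fun _ => if m = 0 then c else 0 :=
    funext fun r => iteratedDeriv_const
  refine ⟨fun m _ => by simp [hderiv], fun m _ => ?_⟩
  rcases eq_or_ne m 0 with rfl | hm
  · simpa using isBigO_const_const c (one_ne_zero (α := ℝ)) (atTop : Filter ℝ)
  · simpa [hderiv, hm] using isBigO_zero _ _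

protected theorem neg (hf : IsSymbol N β f) : IsSymbol N β fun r => -f r := by
  have hderiv (m : ℕ) : iteratedDeriv m (fun r => -f r) = fun r => -iteratedDeriv m f r :=
    funext fun r => iteratedDeriv_fun_neg m f r
  refine ⟨fun m hm => ?_, fun m hm => ?_⟩
  · rw [hderiv]
    exact (hf.differentiableAt m hm).mono fun r hr => hr.neg
  · rw [hderiv]
    exact (hf.isBigO m hm).neg_left

protected theorem add (hf : IsSymbol N β f) (hg : IsSymbol N β g) :
    IsSymbol N β fun r => f r + g r := by
  induction N generalizing β f g with
  | zero => exact zero_iff.mpr (hf.isBigO_self.add hg.isBigO_self)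
  | succ N ih =>
    have hdf := hf.eventually_differentiableAt
    have hdg := hg.eventually_differentiableAt
    refine succ_iff.mpr ⟨?_, hf.isBigO_self.add hg.isBigO_self, (ih hf.deriv hg.deriv).congr' ?_⟩
    · filter_upwards [hdf, hdg] with r hr hr' using hr.add hr'
    · filter_upwards [hdf, hdg] with r hr hr' using (deriv_fun_add hr hr').symm

protected theorem sub (hf : IsSymbol N β f) (hg : IsSymbol N β g) :
    IsSymbol N β fun r => f r - g r := by
  simpa only [sub_eq_add_neg] using hf.add hg.neg

end NormedSpace

section NormedAlgebra

variable {A : Type*} [NormedRing A] [NormedAlgebra ℝ A] {N : ℕ} {β γ : ℝ} {f g : ℝ → A}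

protected theorem mul (hf : IsSymbol N β f) (hg : IsSymbol N γ g) :
    IsSymbol N (β + γ) fun r => f r * g r := by
  induction N generalizing β γ f g with
  | zero =>
    exact zero_iff.mpr (hf.isBigO_self.mul_atTop_rpow_of_isBigO_rpow β γ _ hg.isBigO_self le_rfl)
  | succ N ih =>
    have hdf := hf.eventually_differentiableAt
    have hdg := hg.eventually_differentiableAt
    have hderiv : IsSymbol N (β + γ - 1) fun r => deriv f r * g r + f r * deriv g r :=
      ((ih hf.deriv hg.of_succ).mono_order (by linarith)).add
        ((ih hf.of_succ hg.deriv).mono_order (by linarith))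
    refine succ_iff.mpr ⟨?_,
      hf.isBigO_self.mul_atTop_rpow_of_isBigO_rpow β γ _ hg.isBigO_self le_rfl, hderiv.congr' ?_⟩
    · filter_upwards [hdf, hdg] with r hr hr' using hr.mul hr'
    · filter_upwards [hdf, hdg] with r hr hr' using (deriv_fun_mul hr hr').symm

protected theorem sq (hf : IsSymbol N β f) : IsSymbol N (2 * β) fun r => f r ^ 2 := by
  simpa only [sq, two_mul] using hf.mul hf

end NormedAlgebra

variable {N : ℕ} {β : ℝ} {f : ℝ → ℝ}

protected theorem id (N : ℕ) : IsSymbol N 1 fun r : ℝ => r := by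
  have hbound : (fun r : ℝ => r) =O[atTop] fun r : ℝ => r ^ (1 : ℝ) := by
    simpa only [rpow_one] using isBigO_refl _ _
  cases N with
  | zero => exact zero_iff.mpr hbound
  | succ N =>
    refine succ_iff.mpr ⟨.of_forall fun r => differentiableAt_fun_id, hbound, ?_⟩
    simpa only [deriv_id'', sub_self] using IsSymbol.const N (1 : ℝ)

protected theorem inv (hf : IsSymbol N β f) (hf_ge : (fun r : ℝ => r ^ β) =O[atTop] f) :
    IsSymbol N (-β) fun r => (f r)⁻¹ := by
  have hpos : ∀ᶠ r : ℝ in atTop, 0 < r ^ β :=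
    (eventually_gt_atTop 0).mono fun r hr => rpow_pos_of_pos hr β
  have hne : ∀ᶠ r in atTop, f r ≠ 0 := by
    filter_upwards [hf_ge.eq_zero_imp, hpos] with r hr hr' h0 using hr'.ne' (hr h0)
  have hbound : (fun r => (f r)⁻¹) =O[atTop] fun r : ℝ => r ^ (-β) := by
    refine (hf_ge.inv_rev (hpos.mono fun r hr h0 => absurd h0 hr.ne')).congr' .rfl ?_
    filter_upwards [eventually_ge_atTop 0] with r hr using (rpow_neg hr β).symm
  induction N with
  | zero => exact zero_iff.mpr hbound
  | succ N ih =>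
    have hdf := hf.eventually_differentiableAt
    have hderiv : IsSymbol N (-β - 1) fun r => -(deriv f r * (f r)⁻¹ ^ 2) :=
      ((hf.deriv.mul (ih hf.of_succ).sq).mono_order (by linarith)).neg
    refine succ_iff.mpr ⟨?_, hbound, hderiv.congr' ?_⟩
    · filter_upwards [hdf, hne] with r hr hr' using hr.inv hr'
    · filter_upwards [hdf, hne] with r hr hr'
      rw [deriv_fun_inv'' hr hr', neg_div, div_eq_mul_inv, inv_pow]

end IsSymbol

section ProfileEquation

/-- The equation of a projected minimal curve written as a graph over the projected Simons cone;
`c = 2 (n - 1)` in dimension `n`. -/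
def ProfileEquation (c : ℝ) (ψ : ℝ → ℝ) (r : ℝ) : Prop :=
  deriv (deriv ψ) r / (1 + deriv ψ r ^ 2) + c * (r * deriv ψ r + ψ r) / (r ^ 2 - ψ r ^ 2) = 0

/-- The right-hand side of the profile equation solved for `ψ''`. -/
noncomputable def profileAcceleration (c : ℝ) (ψ : ℝ → ℝ) (r : ℝ) : ℝ :=
  -(c * (1 + deriv ψ r ^ 2) * (r * deriv ψ r + ψ r) * (r ^ 2 - ψ r ^ 2)⁻¹)

variable {c α : ℝ} {ψ : ℝ → ℝ}

theorem ProfileEquation.deriv_deriv_eq {r : ℝ} (h : ProfileEquation c ψ r) :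
    deriv (deriv ψ) r = profileAcceleration c ψ r := by
  have hpos : 1 + deriv ψ r ^ 2 ≠ 0 := by positivity
  rw [(div_eq_iff hpos).mp (eq_neg_of_add_eq_zero_left h), profileAcceleration]
  ring

theorem rpow_two_isBigO_sq_sub_sq (hα : α < 1) (hψ : ψ =O[atTop] fun r : ℝ => r ^ α) :
    (fun r : ℝ => r ^ (2 : ℝ)) =O[atTop] fun r => r ^ 2 - ψ r ^ 2 := by
  have hsmall : ψ =o[atTop] fun r : ℝ => r := by
    simpa only [rpow_one] using hψ.trans_isLittleO (isLittleO_rpow_rpow_atTop hα)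
  simpa only [rpow_two] using!
    (IsEquivalent.refl.sub_isLittleO (hsmall.pow two_pos)).isBigO_symm

theorem isSymbol_profileAcceleration {N : ℕ} (hα : α < 1) (hψ : IsSymbol (N + 1) α ψ) :
    IsSymbol N (α - 2) (profileAcceleration c ψ) := by
  have hslope : IsSymbol N 0 fun r => 1 + deriv ψ r ^ 2 :=
    (IsSymbol.const N 1).add (hψ.deriv.sq.mono_order (by linarith))
  have hnum : IsSymbol N α fun r => r * deriv ψ r + ψ r :=
    (((IsSymbol.id N).mul hψ.deriv).mono_order (by linarith)).add hψ.of_succ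
  have hden : IsSymbol N 2 fun r => r ^ 2 - ψ r ^ 2 :=
    ((IsSymbol.id N).sq.mono_order (by linarith)).sub (hψ.of_succ.sq.mono_order (by linarith))
  have hden_inv := hden.inv (rpow_two_isBigO_sq_sub_sq hα hψ.isBigO_self)
  exact (((((IsSymbol.const N c).mul hslope).mul hnum).mul hden_inv).mono_order (by linarith)).neg

theorem isSymbol_of_profileEquation (hα : α < 1) (hψ : Differentiable ℝ ψ)
    (hψ' : Differentiable ℝ (deriv ψ)) (hODE : ∀ᶠ r in atTop, ProfileEquation c ψ r)
    (h0 : ψ =O[atTop] fun r : ℝ => r ^ α) (h1 : deriv ψ =O[atTop] fun r : ℝ => r ^ (α - 1))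
    (N : ℕ) : IsSymbol N α ψ := by
  suffices hsucc : ∀ M, IsSymbol (M + 1) α ψ from (hsucc N).of_succ
  intro M
  induction M with
  | zero => exact IsSymbol.succ_iff.mpr ⟨.of_forall hψ, h0, IsSymbol.zero_iff.mpr h1⟩
  | succ M ih =>
    have hψ'' : IsSymbol M (α - 1 - 1) (deriv (deriv ψ)) :=
      ((isSymbol_profileAcceleration hα ih).congr'
        (hODE.mono fun r hr => hr.deriv_deriv_eq.symm)).mono_order (by linarith)
    have hψ'_symbol : IsSymbol (M + 1) (α - 1) (deriv ψ) :=
      IsSymbol.succ_iff.mpr ⟨.of_forall hψ', h1, hψ''⟩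
    exact IsSymbol.succ_iff.mpr ⟨.of_forall hψ, h0, hψ'_symbol⟩

end ProfileEquation

theorem abs_iteratedDeriv_rescale_le {f : ℝ → ℝ} {m : ℕ} {C β r₀ l r : ℝ} (hf : ContDiff ℝ m f)
    (hbound : ∀ x, r₀ ≤ x → |iteratedDeriv m f x| ≤ C * x ^ (β - m)) (hr₀ : 0 ≤ r₀) (hl : 0 < l)
    (hr : l * r₀ ≤ r) :
    |iteratedDeriv m (fun x => l * f (l⁻¹ * x)) r| ≤ C * l ^ (1 - β) * r ^ (β - m) := by
  have hr_nonneg : 0 ≤ r := (mul_nonneg hl.le hr₀).trans hr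
  have hpow : l * l⁻¹ ^ m * l⁻¹ ^ (β - m) = l ^ (1 - β) := by
    rw [← rpow_natCast, mul_assoc, ← rpow_add (inv_pos.mpr hl), add_sub_cancel, inv_rpow hl.le,
      ← div_eq_mul_inv, rpow_sub hl, rpow_one]
  calc |iteratedDeriv m (fun x => l * f (l⁻¹ * x)) r|
      = l * l⁻¹ ^ m * |iteratedDeriv m f (l⁻¹ * r)| := by
        rw [iteratedDeriv_const_mul_field, iteratedDeriv_comp_const_mul hf, ← mul_assoc, abs_mul,
          abs_of_pos (by positivity)]
    _ ≤ l * l⁻¹ ^ m * (C * (l⁻¹ * r) ^ (β - m)) := by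
        gcongr
        exact hbound _ ((le_inv_mul_iff₀ hl).mpr hr)
    _ = C * (l * l⁻¹ ^ m * l⁻¹ ^ (β - m)) * r ^ (β - m) := by
        rw [mul_rpow (inv_nonneg.mpr hl.le) hr_nonneg]
        ring
    _ = C * l ^ (1 - β) * r ^ (β - m) := by rw [hpow]

theorem decay_estimates_psi_general {α c r₀ : ℝ} (hα : α < 1) (hr₀ : 0 < r₀) {ψ : ℝ → ℝ}
    (hψ : ContDiff ℝ ∞ ψ) (hODE : ∀ᶠ r in atTop, ProfileEquation c ψ r)
    (h0 : ψ =O[atTop] fun r : ℝ => r ^ α) (h1 : deriv ψ =O[atTop] fun r : ℝ => r ^ (α - 1)) :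
    ∀ m : ℕ, ∃ C : ℝ, 0 < C ∧ ∀ k : ℝ, 0 < k → ∀ r : ℝ, k ^ (1 / (1 - α)) * r₀ ≤ r →
      |iteratedDeriv m (fun x : ℝ => k ^ (1 / (1 - α)) * ψ (k ^ (-(1 / (1 - α))) * x)) r| ≤
        C * k * r ^ (α - m) := by
  intro m
  obtain ⟨hψ_diff, hψ'⟩ := contDiff_infty_iff_deriv.mp hψ
  have hψm : ContDiff ℝ m ψ := contDiff_infty.mp hψ m
  have hsymbol : IsSymbol m α ψ := isSymbol_of_profileEquation hα hψ_diff
    (contDiff_infty_iff_deriv.mp hψ').1 hODE h0 h1 m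
  have hpos {r : ℝ} (hr : r₀ ≤ r) : 0 < r ^ (α - m) := rpow_pos_of_pos (hr₀.trans_le hr) _
  have hbound : iteratedDeriv m ψ =O[𝓟 (Set.Ici r₀)] fun r : ℝ => r ^ (α - m) :=
    isBigO_principal_Ici_of_isBigO_atTop (hsymbol.isBigO m le_rfl)
      (hψm.continuous_iteratedDeriv m le_rfl).continuousOn
      (continuousOn_id.rpow_const fun r hr => .inl (hr₀.trans_le hr).ne')
      fun r hr => (hpos hr).ne'
  obtain ⟨C, hC, hC_bound⟩ := hbound.exists_pos
  refine ⟨C, hC, fun k hk r hr => ?_⟩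
  have hk_pow : (k ^ (1 / (1 - α))) ^ (1 - α) = k := by
    rw [one_div, rpow_inv_rpow hk.le (sub_pos.mpr hα).ne']
  have hrescale := abs_iteratedDeriv_rescale_le hψm (fun x hx => by
    simpa only [norm_eq_abs, abs_of_pos (hpos hx)] using isBigOWith_principal.mp hC_bound x hx)
    hr₀.le (rpow_pos_of_pos hk _) hr
  rwa [hk_pow, ← rpow_neg hk.le] at hrescale

theorem indicialRoot_lt_one {x : ℝ} (hx : 1 < x) :
    (-(2 * x - 3) + √(4 * x ^ 2 - 20 * x + 17)) / 2 < 1 := by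
  have hsqrt : √(4 * x ^ 2 - 20 * x + 17) < 2 * x - 1 :=
    (sqrt_lt' (by linarith)).mpr (by linarith)
  linarith

/-- Decay estimates for all derivatives of the rescaled profile
`ψ_k(r) = k^(1/(1−α)) ψ(k^(−1/(1−α)) r)` of the projected minimal curve over the
projected Simons cone: `|∂_r^m ψ_k(r)| ≤ C k r^(α−m)` for `r ≥ k^(1/(1−α)) r₀`. -/
theorem decay_estimates_psi (n : ℕ) (hn : 4 ≤ n)
    (α : ℝ)
    (hα : α = (-(2 * (n : ℝ) - 3) + Real.sqrt (4 * (n : ℝ) ^ 2 - 20 * (n : ℝ) + 17)) / 2)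
    (r₀ : ℝ) (hr₀ : 0 < r₀) (ψ : ℝ → ℝ) (hψ : ContDiff ℝ (⊤ : ℕ∞) ψ)
    (hrange : ∀ r : ℝ, r₀ ≤ r → 0 < ψ r ∧ ψ r < r)
    (hODE : ∀ r : ℝ, r₀ < r →
      deriv (deriv ψ) r / (1 + (deriv ψ r) ^ 2) +
        2 * ((n : ℝ) - 1) * (r * deriv ψ r + ψ r) / (r ^ 2 - (ψ r) ^ 2) = 0)
    (hlim0 : Tendsto (fun r : ℝ => ψ r / r ^ α) atTop (𝓝 1))
    (hlim1 : Tendsto (fun r : ℝ => deriv ψ r / r ^ (α - 1)) atTop (𝓝 α)) :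
    ∀ m : ℕ, ∃ C : ℝ, 0 < C ∧ ∀ k : ℝ, 0 < k → ∀ r : ℝ, k ^ (1 / (1 - α)) * r₀ ≤ r →
      |iteratedDeriv m (fun x : ℝ => k ^ (1 / (1 - α)) * ψ (k ^ (-(1 / (1 - α))) * x)) r| ≤
        C * k * r ^ (α - (m : ℝ)) :=
  decay_estimates_psi_general (hα ▸ indicialRoot_lt_one (mod_cast (by lia : 1 < n))) hr₀ hψ
    ((eventually_gt_atTop r₀).mono hODE) (isBigO_rpow_of_tendsto_div hlim0)
    (isBigO_rpow_of_tendsto_div hlim1)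
end

section
/- Let n ≥ 4 be an integer. For every smooth compactly supported function v on (0,∞): ∫₀^∞ (v(y)/y)² y^{2(n−1)} e^{−y²/4} dy ≤ (4/(2n−3)²) ∫₀^∞ v'(y)² y^{2(n−1)} e^{−y²/4} dy + (1/(2n−3)) ∫₀^∞ v(y)² y^{2(n−1)} e^{−y²/4} dy. -/
open Real Filter Topology

/-!
Write `k = 2n - 3` and let `w` be the Gaussian weight. Expanding
`0 ≤ ∫ (v + (2 / k) y v')² w y^(k-1)` gives the integrals of `v² w y^(k-1)` and of
`(4 / k²) v'² w y^(k+1)` together with the cross term `(4 / k) ∫ v v' w y^k`. Integrating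
`(v² w)' y^k` by parts, with no boundary term because `k > 0`, trades the cross term for
`-2 ∫ v² w y^(k-1)` and a term containing `w'`, which for the Gaussian is `-(y / 2) w`.
-/

open MeasureTheory Set

theorem tendsto_atTop_zero_of_hasCompactSupport {X E : Type*} [LinearOrder X] [NoMaxOrder X]
    [TopologicalSpace X] [ClosedIciTopology X] [R1Space X] [Zero E] [TopologicalSpace E]
    {f : X → E} (hf : HasCompactSupport f) : Tendsto f atTop (𝓝 0) := by
  rw [hasCompactSupport_iff_eventuallyEq, coclosedCompact_eq_cocompact] at hf
  exact (hf.filter_mono atTop_le_cocompact).tendsto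

theorem hasCompactSupport_sq_mul {X : Type*} [TopologicalSpace X] {f : X → ℝ}
    (hf : HasCompactSupport f) (g : X → ℝ) : HasCompactSupport fun x ↦ f x ^ 2 * g x :=
  (hf.comp_left (zero_pow two_ne_zero)).mul_right

theorem integrableOn_Ioi_mul_rpow_of_hasCompactSupport {f : ℝ → ℝ} {s : ℝ} (hs : -1 < s)
    (hf : Continuous f) (hcpt : HasCompactSupport f) :
    IntegrableOn (fun y ↦ f y * y ^ s) (Ioi 0) := by
  have hlocal : LocallyIntegrable (fun y : ℝ ↦ y ^ s) := by
    refine locallyIntegrable_of_norm_le_rpow (C := 1) (α := -s) (by simp) ?_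
      (.of_forall fun y ↦ ?_) (by fun_prop)
    · rw [Module.finrank_self, Nat.cast_one]
      linarith
    · simpa using abs_rpow_le_abs_rpow y s
  exact (hlocal.integrable_smul_left_of_hasCompactSupport hf hcpt).integrableOn

theorem integral_Ioi_deriv_mul_rpow {u : ℝ → ℝ} {k : ℝ} (hk : 0 < k) (hu : ContDiff ℝ 1 u)
    (hcpt : HasCompactSupport u) :
    ∫ y in Ioi (0 : ℝ), deriv u y * y ^ k = -(k * ∫ y in Ioi (0 : ℝ), u y * y ^ (k - 1)) := by
  have hcont : Continuous fun y ↦ u y * y ^ k :=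
    hu.continuous.mul (continuous_rpow_const hk.le)
  have hderiv (y : ℝ) (hy : y ∈ Ioi 0) :
      HasDerivAt (fun y ↦ u y * y ^ k) (deriv u y * y ^ k + k * (u y * y ^ (k - 1))) y :=
    ((hu.differentiable one_ne_zero y).hasDerivAt.mul
      (hasDerivAt_rpow_const (.inl (ne_of_gt hy)))).congr_deriv (by ring)
  have hint : IntegrableOn (fun y ↦ u y * y ^ (k - 1)) (Ioi 0) :=
    integrableOn_Ioi_mul_rpow_of_hasCompactSupport (by linarith) hu.continuous hcpt
  have hint' : IntegrableOn (fun y ↦ deriv u y * y ^ k) (Ioi 0) :=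
    integrableOn_Ioi_mul_rpow_of_hasCompactSupport (by linarith) hu.continuous_deriv_one hcpt.deriv
  have hFTC := integral_Ioi_of_hasDerivAt_of_tendsto hcont.continuousWithinAt hderiv
    (hint'.add (hint.const_mul k)) (tendsto_atTop_zero_of_hasCompactSupport hcpt.mul_right)
  rw [integral_add hint' (hint.const_mul k), integral_const_mul, zero_rpow hk.ne'] at hFTC
  linarith

theorem integrableOn_Ioi_sq_mul_mul_rpow {f g : ℝ → ℝ} {s : ℝ} (hs : -1 < s) (hf : Continuous f)
    (hcpt : HasCompactSupport f) (hg : Continuous g) :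
    IntegrableOn (fun y ↦ f y ^ 2 * g y * y ^ s) (Ioi 0) :=
  integrableOn_Ioi_mul_rpow_of_hasCompactSupport hs (by fun_prop) (hasCompactSupport_sq_mul hcpt g)

section Hardy

variable {k : ℝ} {v w : ℝ → ℝ}

theorem integral_Ioi_sq_add_mul_deriv_nonneg (hk : 0 < k) (hv : ContDiff ℝ 1 v)
    (hcpt : HasCompactSupport v) (hw : Continuous w) (hw_nonneg : ∀ y > 0, 0 ≤ w y) (t : ℝ) :
    0 ≤ (∫ y in Ioi (0 : ℝ), v y ^ 2 * w y * y ^ (k - 1)) +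
      2 * t * (∫ y in Ioi (0 : ℝ), v y * deriv v y * w y * y ^ k) +
      t ^ 2 * ∫ y in Ioi (0 : ℝ), deriv v y ^ 2 * w y * y ^ (k + 1) := by
  have hvc := hv.continuous
  have hv'c := hv.continuous_deriv_one
  have hint_sq : IntegrableOn (fun y ↦ v y ^ 2 * w y * y ^ (k - 1)) (Ioi 0) :=
    integrableOn_Ioi_sq_mul_mul_rpow (by linarith) hvc hcpt hw
  have hint_cross : IntegrableOn (fun y ↦ v y * deriv v y * w y * y ^ k) (Ioi 0) :=
    integrableOn_Ioi_mul_rpow_of_hasCompactSupport (by linarith) (by fun_prop)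
      hcpt.mul_right.mul_right
  have hint_deriv_sq : IntegrableOn (fun y ↦ deriv v y ^ 2 * w y * y ^ (k + 1)) (Ioi 0) :=
    integrableOn_Ioi_sq_mul_mul_rpow (by linarith) hv'c hcpt.deriv hw
  calc 0 ≤ ∫ y in Ioi (0 : ℝ), (v y + t * (y * deriv v y)) ^ 2 * w y * y ^ (k - 1) :=
        setIntegral_nonneg measurableSet_Ioi fun y hy ↦
          mul_nonneg (mul_nonneg (sq_nonneg _) (hw_nonneg y hy)) (rpow_nonneg (le_of_lt hy) _)
    _ = ∫ y in Ioi (0 : ℝ), (v y ^ 2 * w y * y ^ (k - 1) +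
          2 * t * (v y * deriv v y * w y * y ^ k)) +
          t ^ 2 * (deriv v y ^ 2 * w y * y ^ (k + 1)) := by
      refine setIntegral_congr_fun measurableSet_Ioi fun y hy ↦ ?_
      have hy_ne : y ≠ 0 := ne_of_gt hy
      have hpow : y ^ k = y ^ (k - 1) * y := by rw [← rpow_add_one hy_ne, sub_add_cancel]
      simp only [rpow_add_one hy_ne, hpow]
      ring
    _ = _ := by
      rw [integral_add (by exact hint_sq.add (hint_cross.const_mul _)) (hint_deriv_sq.const_mul _),
        integral_add hint_sq (hint_cross.const_mul _), integral_const_mul, integral_const_mul]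

theorem integral_Ioi_mul_deriv_mul_rpow (hk : 0 < k) (hv : ContDiff ℝ 1 v)
    (hcpt : HasCompactSupport v) (hw : ContDiff ℝ 1 w) :
    2 * ∫ y in Ioi (0 : ℝ), v y * deriv v y * w y * y ^ k =
      -(k * ∫ y in Ioi (0 : ℝ), v y ^ 2 * w y * y ^ (k - 1)) -
        ∫ y in Ioi (0 : ℝ), v y ^ 2 * deriv w y * y ^ k := by
  have hvc := hv.continuous
  have hwc := hw.continuous
  have hw'c := hw.continuous_deriv_one
  have hderiv (y : ℝ) : deriv (fun y ↦ v y ^ 2 * w y) y =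
      2 * (v y * deriv v y * w y) + v y ^ 2 * deriv w y :=
    ((((hv.differentiable one_ne_zero y).hasDerivAt.pow 2).mul
      (hw.differentiable one_ne_zero y).hasDerivAt).congr_deriv
        (by simp only [Pi.pow_apply]; push_cast; ring)).deriv
  have hint_cross : IntegrableOn (fun y ↦ v y * deriv v y * w y * y ^ k) (Ioi 0) :=
    integrableOn_Ioi_mul_rpow_of_hasCompactSupport (by linarith) (by fun_prop)
      hcpt.mul_right.mul_right
  have hint_deriv_weight : IntegrableOn (fun y ↦ v y ^ 2 * deriv w y * y ^ k) (Ioi 0) :=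
    integrableOn_Ioi_sq_mul_mul_rpow (by linarith) hvc hcpt hw'c
  rw [← integral_Ioi_deriv_mul_rpow hk (by fun_prop) (hasCompactSupport_sq_mul hcpt w),
    eq_sub_iff_add_eq, ← integral_const_mul,
    ← integral_add (hint_cross.const_mul 2) hint_deriv_weight]
  simp only [hderiv, add_mul, mul_assoc]

theorem integral_Ioi_sq_mul_rpow_le (hk : 0 < k) (hv : ContDiff ℝ 1 v)
    (hcpt : HasCompactSupport v) (hw : ContDiff ℝ 1 w) (hw_nonneg : ∀ y > 0, 0 ≤ w y) :
    ∫ y in Ioi (0 : ℝ), v y ^ 2 * w y * y ^ (k - 1) ≤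
      4 / k ^ 2 * (∫ y in Ioi (0 : ℝ), deriv v y ^ 2 * w y * y ^ (k + 1)) -
        2 / k * ∫ y in Ioi (0 : ℝ), v y ^ 2 * deriv w y * y ^ k := by
  have hsq := integral_Ioi_sq_add_mul_deriv_nonneg hk hv hcpt hw.continuous hw_nonneg (2 / k)
  rw [mul_right_comm, integral_Ioi_mul_deriv_mul_rpow hk hv hcpt hw] at hsq
  rw [← sub_nonneg]
  convert hsq using 1
  field_simp
  ring

end Hardy

theorem deriv_exp_neg_sq_div_four (y : ℝ) :
    deriv (fun y : ℝ ↦ exp (-y ^ 2 / 4)) y = -(y / 2) * exp (-y ^ 2 / 4) := by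
  have hinner : HasDerivAt (fun y : ℝ ↦ -y ^ 2 / 4) (-(y / 2)) y :=
    ((hasDerivAt_pow 2 y).neg.div_const 4).congr_deriv (by push_cast; ring)
  rw [hinner.exp.deriv, mul_comm]

theorem weighted_hardy_inequality_general {n : ℝ} (hn : 3 / 2 < n) {v : ℝ → ℝ}
    (hv : ContDiff ℝ 1 v) (hcpt : HasCompactSupport v) :
    (∫ y in Ioi (0 : ℝ), (v y / y) ^ 2 * y ^ (2 * (n - 1)) * exp (-y ^ 2 / 4)) ≤
      4 / (2 * n - 3) ^ 2 *
        (∫ y in Ioi (0 : ℝ), deriv v y ^ 2 * y ^ (2 * (n - 1)) * exp (-y ^ 2 / 4)) +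
      1 / (2 * n - 3) *
        (∫ y in Ioi (0 : ℝ), v y ^ 2 * y ^ (2 * (n - 1)) * exp (-y ^ 2 / 4)) := by
  obtain ⟨k, rfl⟩ : ∃ k, n = (k + 3) / 2 := ⟨2 * n - 3, by ring⟩
  have hk : 0 < k := by linarith
  rw [show 2 * ((k + 3) / 2) - 3 = k by ring, show 2 * ((k + 3) / 2 - 1) = k + 1 by ring]
  have hhardy := integral_Ioi_sq_mul_rpow_le hk hv hcpt
    (w := fun y ↦ exp (-y ^ 2 / 4)) (by fun_prop) fun y _ ↦ (exp_pos _).le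
  have hdiv : ∫ y in Ioi (0 : ℝ), (v y / y) ^ 2 * y ^ (k + 1) * exp (-y ^ 2 / 4) =
      ∫ y in Ioi (0 : ℝ), v y ^ 2 * exp (-y ^ 2 / 4) * y ^ (k - 1) := by
    refine setIntegral_congr_fun measurableSet_Ioi fun y hy ↦ ?_
    have hy_ne : y ≠ 0 := ne_of_gt hy
    simp only [rpow_add_one hy_ne, rpow_sub_one hy_ne]
    field_simp
  have hgauss : ∫ y in Ioi (0 : ℝ), v y ^ 2 * deriv (fun y ↦ exp (-y ^ 2 / 4)) y * y ^ k =
      -(1 / 2) * ∫ y in Ioi (0 : ℝ), v y ^ 2 * y ^ (k + 1) * exp (-y ^ 2 / 4) := by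
    rw [← integral_const_mul]
    refine setIntegral_congr_fun measurableSet_Ioi fun y hy ↦ ?_
    simp only [deriv_exp_neg_sq_div_four, rpow_add_one (ne_of_gt hy)]
    ring
  rw [← hdiv, hgauss] at hhardy
  simp only [mul_right_comm _ (exp _)] at hhardy
  exact hhardy.trans_eq (by ring)

/-- Weighted Hardy-type inequality: for smooth compactly supported `v` on `(0,∞)`,
`‖v/y‖² ≤ (4/(2n−3)²) ‖v'‖² + (1/(2n−3)) ‖v‖²` with weight `y^(2(n−1)) e^(−y²/4)`. -/
theorem weighted_hardy_inequality (n : ℕ) (hn : 4 ≤ n) (v : ℝ → ℝ)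
    (hv : ContDiff ℝ (⊤ : ℕ∞) v) (hcpt : HasCompactSupport v)
    (hsupp : tsupport v ⊆ Set.Ioi 0) :
    (∫ y in Set.Ioi (0 : ℝ),
        (v y / y) ^ 2 * y ^ (2 * (n - 1)) * Real.exp (-y ^ 2 / 4)) ≤
      4 / (2 * (n : ℝ) - 3) ^ 2 *
        (∫ y in Set.Ioi (0 : ℝ),
          (deriv v y) ^ 2 * y ^ (2 * (n - 1)) * Real.exp (-y ^ 2 / 4)) +
      1 / (2 * (n : ℝ) - 3) *
        (∫ y in Set.Ioi (0 : ℝ),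
          (v y) ^ 2 * y ^ (2 * (n - 1)) * Real.exp (-y ^ 2 / 4)) := by
  have hn' : (4 : ℝ) ≤ n := by exact_mod_cast hn
  simpa only [← rpow_natCast, Nat.cast_mul, Nat.cast_pred (by omega : 0 < n), Nat.cast_ofNat] using
    weighted_hardy_inequality_general (by linarith) (hv.of_le (by exact_mod_cast le_top)) hcpt
end

section
/- Let n ≥ 4 be an integer, let α = α(n) := (−(2n−3)+√(4n²−20n+17))/2, and set Υ₁ := −1/(4(n+α−1/2)), Υ₂ := 1/(16(n+α−1/2)(n+α+1/2)), and λ_i := −(1−α)/2 + i for i = 0,1,2. Define the operator L by (Lv)(y) := −(v''(y) + 2(n−1)(y v'(y) + v(y))/y² + (1/2)(−y v'(y) + v(y))). Then for all y > 0: the function φ₀(y) = y^α satisfies Lφ₀ = λ₀ φ₀; the function φ₁(y) = y^α(1 + Υ₁ y²) satisfies Lφ₁ = λ₁ φ₁; and the function φ₂(y) = y^α(1 + 2Υ₁ y² + Υ₂ y⁴) satisfies Lφ₂ = λ₂ φ₂. -/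
open Real Filter Topology

/-! On a power `y ^ β` the operator gives `-(1 - β) / 2 * y ^ β - P β * y ^ (β - 2)`, where `P` is
the indicial polynomial. If `P α = 0`, then `L` is therefore triangular on `y ^ α, y ^ (α + 2), …`,
with diagonal entries `-(1 - α) / 2 + j`, and since `P (α + 2 j) = 4 j (m + α - 1 / 2 + (j - 1))`,
the coefficients of an eigenfunction satisfy a two-term recursion, solved by binomial coefficients
times a product. With these coefficients `L φ_k - λ_k φ_k` telescopes to zero. -/

/-- The operator `L`, the negative of the linearization of normalized mean curvature flow at the
cone, with a real parameter `m` in place of the dimension `n`. -/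
noncomputable def linearizedOperator (m : ℝ) (v : ℝ → ℝ) (y : ℝ) : ℝ :=
  -(deriv (deriv v) y + 2 * (m - 1) * (y * deriv v y + v y) / y ^ 2 +
    (1 / 2) * (-(y * deriv v y) + v y))

/-- The indicial polynomial of `linearizedOperator m` at the singular point `0`. -/
def indicialPoly (m β : ℝ) : ℝ := β * (β - 1) + 2 * (m - 1) * (β + 1)

/-- The larger root of `indicialPoly m`, denoted `α` in the paper. It is a root only if the
expression under the square root is nonnegative. -/
noncomputable def indicialRoot (m : ℝ) : ℝ :=
  (-(2 * m - 3) + √(4 * m ^ 2 - 20 * m + 17)) / 2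

/-- The numbers `Υ_j` of the paper, for all `j`, in terms of `a = n + α - 1 / 2`. -/
noncomputable def eigencoeff (a : ℝ) (j : ℕ) : ℝ :=
  ∏ i ∈ Finset.range j, -1 / (4 * (a + i))

/-- The eigenfunction `φ_k` of `linearizedOperator m`, for an arbitrary index `k`. -/
noncomputable def eigenfunction (m α : ℝ) (k : ℕ) (y : ℝ) : ℝ :=
  y ^ α * ∑ j ∈ Finset.range (k + 1), k.choose j * eigencoeff (m + α - 1 / 2) j * y ^ (2 * j)

section Powers

variable {ι : Type*} (s : Finset ι) (c β : ι → ℝ) {y : ℝ}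

theorem deriv_sum_mul_rpow (hy : 0 < y) :
    deriv (fun x : ℝ => ∑ i ∈ s, c i * x ^ β i) y = ∑ i ∈ s, c i * β i * y ^ (β i - 1) := by
  simpa only [mul_assoc] using
    (HasDerivAt.fun_sum fun i _ =>
      (hasDerivAt_rpow_const (p := β i) (Or.inl hy.ne')).const_mul (c i)).deriv

theorem deriv_deriv_sum_mul_rpow (hy : 0 < y) :
    deriv (deriv fun x : ℝ => ∑ i ∈ s, c i * x ^ β i) y =
      ∑ i ∈ s, c i * β i * (β i - 1) * y ^ (β i - 2) := by
  have hderiv : deriv (fun x : ℝ => ∑ i ∈ s, c i * x ^ β i) =ᶠ[𝓝 y]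
      fun x => ∑ i ∈ s, c i * β i * x ^ (β i - 1) := by
    filter_upwards [lt_mem_nhds hy] with x hx using deriv_sum_mul_rpow s c β hx
  rw [hderiv.deriv_eq, deriv_sum_mul_rpow s _ _ hy]
  refine Finset.sum_congr rfl fun i _ => ?_
  rw [sub_sub, one_add_one_eq_two]

theorem linearizedOperator_sum_mul_rpow (m : ℝ) (hy : 0 < y) :
    linearizedOperator m (fun x => ∑ i ∈ s, c i * x ^ β i) y =
      ∑ i ∈ s, c i * (-(1 - β i) / 2 * y ^ β i - indicialPoly m (β i) * y ^ (β i - 2)) := by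
  simp only [linearizedOperator, deriv_deriv_sum_mul_rpow s c β hy, deriv_sum_mul_rpow s c β hy,
    Finset.mul_sum, ← Finset.sum_add_distrib, Finset.sum_div, ← Finset.sum_neg_distrib]
  refine Finset.sum_congr rfl fun i _ => ?_
  rw [rpow_sub_one hy.ne', rpow_sub hy, rpow_two, indicialPoly]
  field_simp
  ring

end Powers

theorem linearizedOperator_congr {v w : ℝ → ℝ} {y : ℝ} (m : ℝ) (h : v =ᶠ[𝓝 y] w) :
    linearizedOperator m v y = linearizedOperator m w y := by
  simp only [linearizedOperator, h.deriv.deriv_eq, h.deriv_eq, h.eq_of_nhds]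

theorem indicialPoly_add_two_mul {m α : ℝ} (hα : indicialPoly m α = 0) (t : ℝ) :
    indicialPoly m (α + 2 * t) = 4 * t * (m + α - 1 / 2 + (t - 1)) := by
  unfold indicialPoly at *
  linear_combination hα

theorem indicialPoly_indicialRoot {m : ℝ} (hm : 0 ≤ 4 * m ^ 2 - 20 * m + 17) :
    indicialPoly m (indicialRoot m) = 0 := by
  unfold indicialPoly indicialRoot
  linear_combination sq_sqrt hm / 4

theorem one_le_add_indicialRoot (m : ℝ) : 1 ≤ m + indicialRoot m - 1 / 2 := by
  unfold indicialRoot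
  linarith [sqrt_nonneg (4 * m ^ 2 - 20 * m + 17)]

theorem eigencoeff_succ {a : ℝ} {j : ℕ} (ha : a + j ≠ 0) :
    4 * (a + j) * eigencoeff a (j + 1) = -eigencoeff a j := by
  rw [eigencoeff, Finset.prod_range_succ, ← eigencoeff]
  field_simp

theorem choose_succ_mul_eigencoeff_succ {a : ℝ} {j k : ℕ} (hjk : j ≤ k)
    (ha : ∀ i < k, a + (i : ℝ) ≠ 0) :
    k.choose (j + 1) * eigencoeff a (j + 1) * (4 * (j + 1) * (a + j)) =
      (j - k) * (k.choose j * eigencoeff a j) := by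
  rcases hjk.eq_or_lt with rfl | hlt
  · simp
  have hchoose : (k.choose (j + 1) : ℝ) * (j + 1) = k.choose j * (k - j) := by
    rw [← Nat.cast_sub hjk]
    exact_mod_cast Nat.choose_succ_right_eq k j
  linear_combination 4 * (a + j) * eigencoeff a (j + 1) * hchoose +
    k.choose j * (k - j) * eigencoeff_succ (ha j hlt)

section Eigenfunction

variable (m α : ℝ) (k : ℕ)

theorem eigenfunction_eq_sum_rpow {y : ℝ} (hy : 0 < y) :
    eigenfunction m α k y = ∑ j ∈ Finset.range (k + 1),
      k.choose j * eigencoeff (m + α - 1 / 2) j * y ^ (α + 2 * (j : ℝ)) := by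
  rw [eigenfunction, Finset.mul_sum]
  refine Finset.sum_congr rfl fun j _ => ?_
  have hpow : y ^ (α + 2 * (j : ℝ)) = y ^ α * y ^ (2 * j) := by
    exact_mod_cast rpow_add_natCast hy.ne' α (2 * j)
  rw [hpow, mul_left_comm]

theorem eigenfunction_zero : eigenfunction m α 0 = fun y => y ^ α := by
  ext y
  simp [eigenfunction, eigencoeff]

theorem eigenfunction_one :
    eigenfunction m α 1 = fun y => y ^ α * (1 + -1 / (4 * (m + α - 1 / 2)) * y ^ 2) := by
  ext y
  simp [eigenfunction, eigencoeff, Finset.sum_range_succ]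

theorem eigenfunction_two :
    eigenfunction m α 2 = fun y => y ^ α * (1 + 2 * (-1 / (4 * (m + α - 1 / 2))) * y ^ 2 +
      1 / (16 * (m + α - 1 / 2) * (m + α + 1 / 2)) * y ^ 4) := by
  have hcoeff : eigencoeff (m + α - 1 / 2) 2 =
      1 / (16 * (m + α - 1 / 2) * (m + α + 1 / 2)) := by
    rw [eigencoeff, Finset.prod_range_succ, Finset.prod_range_one, div_mul_div_comm]
    push_cast
    ring_nf
  ext y
  rw [← hcoeff]
  simp [eigenfunction, eigencoeff, Finset.sum_range_succ]

end Eigenfunction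

theorem eigenfunctions_linearized_operator_general {m α y : ℝ} {k : ℕ}
    (hα : indicialPoly m α = 0) (hk : ∀ j < k, m + α - 1 / 2 + (j : ℝ) ≠ 0) (hy : 0 < y) :
    linearizedOperator m (eigenfunction m α k) y =
      (-(1 - α) / 2 + k) * eigenfunction m α k y := by
  have hsum : eigenfunction m α k =ᶠ[𝓝 y] fun x => ∑ j ∈ Finset.range (k + 1),
      k.choose j * eigencoeff (m + α - 1 / 2) j * x ^ (α + 2 * (j : ℝ)) := by
    filter_upwards [lt_mem_nhds hy] with x hx using eigenfunction_eq_sum_rpow m α k hx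
  rw [linearizedOperator_congr m hsum, linearizedOperator_sum_mul_rpow _ _ _ m hy,
    eigenfunction_eq_sum_rpow m α k hy, Finset.mul_sum, ← sub_eq_zero, ← Finset.sum_sub_distrib]
  let g (j : ℕ) : ℝ := k.choose j * eigencoeff (m + α - 1 / 2) j *
    indicialPoly m (α + 2 * j) * y ^ (α + 2 * (j : ℝ) - 2)
  have hg_succ {j : ℕ} (hj : j ≤ k) : g (j + 1) =
      (j - k) * (k.choose j * eigencoeff (m + α - 1 / 2) j) * y ^ (α + 2 * (j : ℝ)) := by
    have hexp : α + 2 * ((j : ℝ) + 1) - 2 = α + 2 * j := by ring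
    simp only [g, indicialPoly_add_two_mul hα, Nat.cast_add_one, add_sub_cancel_right, hexp,
      choose_succ_mul_eigencoeff_succ hj hk]
  calc
    _ = ∑ j ∈ Finset.range (k + 1), (g (j + 1) - g j) := by
      refine Finset.sum_congr rfl fun j hj => ?_
      rw [hg_succ (Finset.mem_range_succ_iff.mp hj)]
      ring
    _ = g (k + 1) - g 0 := Finset.sum_range_sub g (k + 1)
    _ = 0 := by simp [g, hα]

/-- The first three eigenfunctions of the linearized operator
`L v = −(v'' + 2(n−1)(y v' + v)/y² + (1/2)(−y v' + v))`:
`φ_i` satisfies `L φ_i = λ_i φ_i` for `i = 0, 1, 2`, where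
`λ_i = −(1−α)/2 + i`. -/
theorem eigenfunctions_linearized_operator (n : ℕ) (hn : 4 ≤ n)
    (α : ℝ)
    (hα : α = (-(2 * (n : ℝ) - 3) + Real.sqrt (4 * (n : ℝ) ^ 2 - 20 * (n : ℝ) + 17)) / 2)
    (Υ₁ Υ₂ : ℝ)
    (hΥ₁ : Υ₁ = -1 / (4 * ((n : ℝ) + α - 1 / 2)))
    (hΥ₂ : Υ₂ = 1 / (16 * ((n : ℝ) + α - 1 / 2) * ((n : ℝ) + α + 1 / 2)))
    (lam : ℕ → ℝ) (hlam : ∀ i : ℕ, lam i = -(1 - α) / 2 + (i : ℝ))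
    (L : (ℝ → ℝ) → ℝ → ℝ)
    (hL : ∀ (v : ℝ → ℝ) (y : ℝ),
      L v y = -(deriv (deriv v) y + 2 * ((n : ℝ) - 1) * (y * deriv v y + v y) / y ^ 2 +
        (1 / 2) * (-(y * deriv v y) + v y))) :
    ∀ y : ℝ, 0 < y →
      L (fun y : ℝ => y ^ α) y = lam 0 * y ^ α ∧
      L (fun y : ℝ => y ^ α * (1 + Υ₁ * y ^ 2)) y =
        lam 1 * (y ^ α * (1 + Υ₁ * y ^ 2)) ∧
      L (fun y : ℝ => y ^ α * (1 + 2 * Υ₁ * y ^ 2 + Υ₂ * y ^ 4)) y =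
        lam 2 * (y ^ α * (1 + 2 * Υ₁ * y ^ 2 + Υ₂ * y ^ 4)) := by
  intro y hy
  obtain rfl : L = linearizedOperator n := funext₂ hL
  obtain rfl : α = indicialRoot n := hα
  have hn' : (4 : ℝ) ≤ n := by exact_mod_cast hn
  have hroot := indicialPoly_indicialRoot (m := n) (by nlinarith)
  have hφ (k : ℕ) : linearizedOperator n (eigenfunction n (indicialRoot n) k) y =
      lam k * eigenfunction n (indicialRoot n) k y := by
    rw [hlam]
    refine eigenfunctions_linearized_operator_general hroot (fun j _ => ?_) hy
    linarith [one_le_add_indicialRoot n, j.cast_nonneg (α := ℝ)]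
  rw [hΥ₁, hΥ₂]
  simpa only [eigenfunction_zero, eigenfunction_one, eigenfunction_two] using
    And.intro (hφ 0) (And.intro (hφ 1) (hφ 2))
end

section
/- Let n ≥ 4 be an integer, let α = α(n) := (−(2n−3)+√(4n²−20n+17))/2, and set Υ₁ := −1/(4(n+α−1/2)) and Υ₂ := 1/(16(n+α−1/2)(n+α+1/2)). Then for every y > 0 one has α(α−1) + 2Υ₁(α+2)(α+1) y² + Υ₂(α+4)(α+3) y⁴ > 0; equivalently, the function φ₂(y) = y^α(1 + 2Υ₁ y² + Υ₂ y⁴) satisfies φ₂''(y) > 0 for all y > 0. -/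
open Real Filter Topology

/-!
For `4 ≤ n` the discriminant `4 n² - 20 n + 17` lies between `(2 n - 7)²` and `(2 n - 5)²`, which
gives `-2 ≤ α < -1`. The second derivative of `x ^ α * (c₀ + c₁ * x ^ 2 + c₂ * x ^ 4)` is
`x ^ (α - 2)` times an even quartic whose coefficients are `c₀`, `c₁`, `c₂` multiplied by
`α (α - 1)`, `(α + 2) (α + 1)` and `(α + 4) (α + 3)`. In this range of `α` only the middle
multiplier is not positive, and `Υ₁ < 0` compensates its sign, so no cancellation between the
terms has to be controlled.
-/

theorem hasDerivAt_rpow_mul (a : ℝ) {f : ℝ → ℝ} {f' y : ℝ} (hy : y ≠ 0)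
    (hf : HasDerivAt f f' y) :
    HasDerivAt (fun x ↦ x ^ a * f x) (y ^ (a - 1) * (a * f y + y * f')) y := by
  have hrpow : y ^ a = y ^ (a - 1) * y := by
    rw [← rpow_add_one hy, sub_add_cancel]
  refine ((hasDerivAt_rpow_const (Or.inl hy)).fun_mul hf).congr_deriv ?_
  rw [hrpow]
  ring

theorem deriv_deriv_rpow_mul (a : ℝ) {f f' : ℝ → ℝ} {f'' y : ℝ} (hy : y ≠ 0)
    (hf : ∀ᶠ x in 𝓝 y, HasDerivAt f (f' x) x) (hf' : HasDerivAt f' f'' y) :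
    deriv (deriv fun x ↦ x ^ a * f x) y =
      y ^ (a - 2) * (a * (a - 1) * f y + 2 * a * y * f' y + y ^ 2 * f'') := by
  have hderiv : deriv (fun x ↦ x ^ a * f x) =ᶠ[𝓝 y]
      fun x ↦ x ^ (a - 1) * (a * f x + x * f' x) := by
    filter_upwards [hf, eventually_ne_nhds hy] with x hfx hx
    exact (hasDerivAt_rpow_mul a hx hfx).deriv
  have hfactor : HasDerivAt (fun x ↦ a * f x + x * f' x)
      (a * f' y + (1 * f' y + y * f'')) y :=
    (hf.self_of_nhds.const_mul a).fun_add ((hasDerivAt_id' y).fun_mul hf')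
  rw [hderiv.deriv_eq, (hasDerivAt_rpow_mul (a - 1) hy hfactor).deriv,
    show a - 1 - 1 = a - 2 by ring]
  ring

theorem deriv_deriv_rpow_mul_even_quartic (a c₀ c₁ c₂ : ℝ) {y : ℝ} (hy : y ≠ 0) :
    deriv (deriv fun x : ℝ ↦ x ^ a * (c₀ + c₁ * x ^ 2 + c₂ * x ^ 4)) y =
      y ^ (a - 2) * (a * (a - 1) * c₀ + c₁ * (a + 2) * (a + 1) * y ^ 2 +
        c₂ * (a + 4) * (a + 3) * y ^ 4) := by
  have hquartic (x : ℝ) : HasDerivAt (fun x ↦ c₀ + c₁ * x ^ 2 + c₂ * x ^ 4)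
      (c₁ * (2 * x) + c₂ * (4 * x ^ 3)) x := by
    simpa using (((hasDerivAt_pow 2 x).const_mul c₁).const_add c₀).fun_add
      ((hasDerivAt_pow 4 x).const_mul c₂)
  have hcubic : HasDerivAt (fun x ↦ c₁ * (2 * x) + c₂ * (4 * x ^ 3))
      (c₁ * 2 + c₂ * (4 * (3 * y ^ 2))) y := by
    simpa using (((hasDerivAt_id' y).const_mul 2).const_mul c₁).fun_add
      (((hasDerivAt_pow 3 y).const_mul 4).const_mul c₂)
  rw [deriv_deriv_rpow_mul a hy (.of_forall hquartic) hcubic]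
  ring

theorem even_quartic_pos_of_mem_Icc {α Υ₁ Υ₂ : ℝ} (hα : α ∈ Set.Icc (-2) (-1))
    (hΥ₁ : Υ₁ ≤ 0) (hΥ₂ : 0 ≤ Υ₂) (y : ℝ) :
    0 < α * (α - 1) + 2 * Υ₁ * (α + 2) * (α + 1) * y ^ 2 +
      Υ₂ * (α + 4) * (α + 3) * y ^ 4 := by
  obtain ⟨hα_lower, hα_upper⟩ := hα
  have hconst : 0 < α * (α - 1) := mul_pos_of_neg_of_neg (by linarith) (by linarith)
  have hquad : 0 ≤ 2 * Υ₁ * (α + 2) * (α + 1) :=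
    mul_nonneg_of_nonpos_of_nonpos
      (mul_nonpos_of_nonpos_of_nonneg (by linarith) (by linarith)) (by linarith)
  have hquart : 0 ≤ Υ₂ * (α + 4) * (α + 3) :=
    mul_nonneg (mul_nonneg hΥ₂ (by linarith)) (by linarith)
  positivity

/-- The exponent `α(n)` of the eigenfunction `φ₂`, for a real parameter `n`: the larger root of
`α (α - 1) + 2 (n - 1) (α + 1)` whenever this quadratic in `α` has real roots. -/
noncomputable def phi2Exponent (n : ℝ) : ℝ :=
  (-(2 * n - 3) + √(4 * n ^ 2 - 20 * n + 17)) / 2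

theorem phi2Exponent_mem_Ico {n : ℝ} (hn : 4 ≤ n) : phi2Exponent n ∈ Set.Ico (-2) (-1) := by
  have hsqrt_lower : 2 * n - 7 ≤ √(4 * n ^ 2 - 20 * n + 17) :=
    le_sqrt_of_sq_le (by linarith)
  have hsqrt_upper : √(4 * n ^ 2 - 20 * n + 17) < 2 * n - 5 :=
    (sqrt_lt' (by linarith)).2 (by linarith)
  rw [phi2Exponent]
  constructor <;> linarith

theorem convexity_phi2_general {n α Υ₁ Υ₂ : ℝ} (hn : 4 ≤ n) (hα : α = phi2Exponent n)
    (hΥ₁ : Υ₁ = -1 / (4 * (n + α - 1 / 2)))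
    (hΥ₂ : Υ₂ = 1 / (16 * (n + α - 1 / 2) * (n + α + 1 / 2))) {y : ℝ} (hy : 0 < y) :
    0 < α * (α - 1) + 2 * Υ₁ * (α + 2) * (α + 1) * y ^ 2 +
        Υ₂ * (α + 4) * (α + 3) * y ^ 4 ∧
    0 < deriv (deriv (fun y : ℝ ↦ y ^ α * (1 + 2 * Υ₁ * y ^ 2 + Υ₂ * y ^ 4))) y := by
  have hα_mem : α ∈ Set.Ico (-2) (-1) := hα ▸ phi2Exponent_mem_Ico hn
  have hden₁ : 0 < n + α - 1 / 2 := by linarith [hα_mem.1]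
  have hden₂ : 0 < n + α + 1 / 2 := by linarith
  have hΥ₁_nonpos : Υ₁ ≤ 0 :=
    hΥ₁ ▸ div_nonpos_of_nonpos_of_nonneg (by norm_num) (by positivity)
  have hΥ₂_nonneg : 0 ≤ Υ₂ := hΥ₂ ▸ by positivity
  have hpos := even_quartic_pos_of_mem_Icc (Set.Ico_subset_Icc_self hα_mem)
    hΥ₁_nonpos hΥ₂_nonneg y
  refine ⟨hpos, ?_⟩
  rw [deriv_deriv_rpow_mul_even_quartic α 1 (2 * Υ₁) Υ₂ hy.ne', mul_one]
  exact mul_pos (rpow_pos_of_pos hy _) hpos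

/-- Convexity of the eigenfunction `φ₂(y) = y^α(1 + 2Υ₁y² + Υ₂y⁴)`: for all `y > 0`,
`α(α−1) + 2Υ₁(α+2)(α+1)y² + Υ₂(α+4)(α+3)y⁴ > 0`, equivalently `φ₂''(y) > 0`. -/
theorem convexity_phi2 (n : ℕ) (hn : 4 ≤ n)
    (α : ℝ)
    (hα : α = (-(2 * (n : ℝ) - 3) + Real.sqrt (4 * (n : ℝ) ^ 2 - 20 * (n : ℝ) + 17)) / 2)
    (Υ₁ Υ₂ : ℝ)
    (hΥ₁ : Υ₁ = -1 / (4 * ((n : ℝ) + α - 1 / 2)))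
    (hΥ₂ : Υ₂ = 1 / (16 * ((n : ℝ) + α - 1 / 2) * ((n : ℝ) + α + 1 / 2))) :
    ∀ y : ℝ, 0 < y →
      0 < α * (α - 1) + 2 * Υ₁ * (α + 2) * (α + 1) * y ^ 2 +
          Υ₂ * (α + 4) * (α + 3) * y ^ 4 ∧
      0 < deriv (deriv (fun y : ℝ => y ^ α * (1 + 2 * Υ₁ * y ^ 2 + Υ₂ * y ^ 4))) y :=
  fun _ ↦ convexity_phi2_general (by exact_mod_cast hn) hα hΥ₁ hΥ₂
end

section
/- Let n ≥ 4 be an integer. There is a constant C > 0 depending only on n such that for every continuously differentiable function v with compact support in (0,∞) and every y > 0: |v(y)| ≤ C·(y^{−(n−1/2)} + e^{(y+1)²/4})·(‖v'‖ + ‖v‖), where ‖f‖² = ∫₀^∞ f(z)² z^{2(n−1)} e^{−z²/4} dz. -/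
open Real Filter Topology

/-!
Integrating the derivative of `z ↦ (b - z) * v z ^ 2` over `[a, b]` bounds `v a ^ 2` by the
unweighted `H¹` norm of `v` on `[a, b]`, and a lower bound for the weight on `[a, b]` turns that
norm into the weighted one. The pointwise bound at `y` then comes from the window `[y, 2 * y]` when
`y ≤ 1`, where the weight is at least `y ^ α * e⁻¹`, and from the window `[y, y + 1]` when `1 ≤ y`,
where it is at least `e ^ (-(y + 1) ^ 2 / 4)`.
-/

open MeasureTheory Set

section Weight

variable {X : Type*} [MeasurableSpace X] {μ : Measure X} {g w : X → ℝ} {s t : Set X} {m : ℝ}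

lemma integrableOn_of_integrableOn_mul_of_le (ht : MeasurableSet t) (hm : 0 < m)
    (hmw : ∀ x ∈ t, m ≤ w x) (hg : AEStronglyMeasurable g (μ.restrict t))
    (hgw : IntegrableOn (fun x => g x * w x) t μ) : IntegrableOn g t μ := by
  refine (hgw.div_const m).mono hg (ae_restrict_of_forall_mem ht fun x hx => ?_)
  rw [norm_div, norm_mul, norm_of_nonneg hm.le, norm_of_nonneg (hm.le.trans (hmw x hx)),
    le_div_iff₀ hm]
  exact mul_le_mul_of_nonneg_left (hmw x hx) (norm_nonneg _)

lemma const_mul_setIntegral_le_setIntegral_mul (hs : MeasurableSet s) (ht : MeasurableSet t)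
    (hts : t ⊆ s) (hg : ∀ x ∈ s, 0 ≤ g x) (hw : ∀ x ∈ s, 0 ≤ w x) (hmw : ∀ x ∈ t, m ≤ w x)
    (hgt : IntegrableOn g t μ) (hgw : IntegrableOn (fun x => g x * w x) s μ) :
    m * ∫ x in t, g x ∂μ ≤ ∫ x in s, g x * w x ∂μ :=
  calc m * ∫ x in t, g x ∂μ = ∫ x in t, g x * m ∂μ := by rw [integral_mul_const, mul_comm]
    _ ≤ ∫ x in t, g x * w x ∂μ :=
      setIntegral_mono_on (hgt.mul_const m) (hgw.mono_set hts) ht fun x hx =>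
        mul_le_mul_of_nonneg_left (hmw x hx) (hg x (hts hx))
    _ ≤ ∫ x in s, g x * w x ∂μ :=
      setIntegral_mono_set hgw
        (ae_restrict_of_forall_mem hs fun x hx => mul_nonneg (hg x hx) (hw x hx))
        hts.eventuallyLE

end Weight

section Interval

variable {v w : ℝ → ℝ} {a b m : ℝ}

lemma abs_sub_mul_two_mul_mul_le {z x y : ℝ} (hz : z ∈ Icc a b) :
    |(b - z) * (2 * x * y)| ≤ (b - a) * (x ^ 2 + y ^ 2) := by
  rw [abs_mul, abs_of_nonneg (sub_nonneg.2 hz.2)]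
  have hxy : |2 * x * y| ≤ x ^ 2 + y ^ 2 :=
    abs_le.2 ⟨by nlinarith [sq_nonneg (x + y)], two_mul_le_add_sq x y⟩
  gcongr
  · exact sub_nonneg.2 (hz.1.trans hz.2)
  · exact hz.1

lemma intervalIntegrable_sub_mul_mul_deriv (hab : a ≤ b) (hv : ContinuousOn v (Icc a b))
    (hi : IntervalIntegrable (fun z => deriv v z ^ 2) volume a b) :
    IntervalIntegrable (fun z => (b - z) * (2 * v z * deriv v z)) volume a b := by
  rw [intervalIntegrable_iff_integrableOn_Icc_of_le hab] at hi ⊢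
  have hv_sq : IntegrableOn (fun z => v z ^ 2) (Icc a b) := (hv.pow 2).integrableOn_Icc
  have hv_meas := hv.aestronglyMeasurable (μ := volume) measurableSet_Icc
  have hd_meas := (stronglyMeasurable_deriv v).aestronglyMeasurable (μ := volume.restrict (Icc a b))
  exact ((hv_sq.add hi).const_mul (b - a)).mono' (by fun_prop)
    (ae_restrict_of_forall_mem measurableSet_Icc fun z hz => abs_sub_mul_two_mul_mul_le hz)

lemma sub_mul_sq_eq_integral (hab : a ≤ b) (hv : ContinuousOn v (Icc a b))
    (hd : DifferentiableOn ℝ v (Ioo a b))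
    (hi : IntervalIntegrable (fun z => deriv v z ^ 2) volume a b) :
    (b - a) * v a ^ 2 = ∫ z in a..b, (v z ^ 2 - (b - z) * (2 * v z * deriv v z)) := by
  have hderiv : ∀ z ∈ Ioo a b, HasDerivAt (fun z => -((b - z) * v z ^ 2))
      (v z ^ 2 - (b - z) * (2 * v z * deriv v z)) z := fun z hz => by
    have hvz := (hd.differentiableAt (isOpen_Ioo.mem_nhds hz)).hasDerivAt
    exact (((hasDerivAt_id z).const_sub b).mul (hvz.pow 2)).neg.congr_deriv (by simp; ring)
  rw [intervalIntegral.integral_eq_sub_of_hasDerivAt_of_le hab (by fun_prop) hderiv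
    (((hv.pow 2).intervalIntegrable_of_Icc hab).sub
      (intervalIntegrable_sub_mul_mul_deriv hab hv hi))]
  ring

lemma sub_mul_sq_le_integral_sq_add_integral_deriv_sq (hab : a ≤ b) (hv : ContinuousOn v (Icc a b))
    (hd : DifferentiableOn ℝ v (Ioo a b))
    (hi : IntervalIntegrable (fun z => deriv v z ^ 2) volume a b) :
    (b - a) * v a ^ 2 ≤
      (1 + (b - a)) * (∫ z in a..b, v z ^ 2) + (b - a) * ∫ z in a..b, deriv v z ^ 2 := by
  have hv_sq : IntervalIntegrable (fun z => v z ^ 2) volume a b :=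
    (hv.pow 2).intervalIntegrable_of_Icc hab
  calc (b - a) * v a ^ 2
      = ∫ z in a..b, (v z ^ 2 - (b - z) * (2 * v z * deriv v z)) :=
        sub_mul_sq_eq_integral hab hv hd hi
    _ ≤ ∫ z in a..b, ((1 + (b - a)) * v z ^ 2 + (b - a) * deriv v z ^ 2) := by
        refine intervalIntegral.integral_mono_on hab
          (hv_sq.sub (intervalIntegrable_sub_mul_mul_deriv hab hv hi))
          ((hv_sq.const_mul _).add (hi.const_mul _)) fun z hz => ?_
        linarith [neg_abs_le ((b - z) * (2 * v z * deriv v z)),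
          abs_sub_mul_two_mul_mul_le (x := v z) (y := deriv v z) hz]
    _ = _ := by
        rw [intervalIntegral.integral_add (hv_sq.const_mul _) (hi.const_mul _),
          intervalIntegral.integral_const_mul, intervalIntegral.integral_const_mul]

variable {s : Set ℝ}

lemma mul_sub_mul_sq_le_setIntegral_mul (hs : MeasurableSet s) (habs : Icc a b ⊆ s) (hab : a ≤ b)
    (hw : ∀ z ∈ s, 0 ≤ w z) (hm : 0 < m) (hmw : ∀ z ∈ Icc a b, m ≤ w z)
    (hv : ContinuousOn v (Icc a b)) (hd : DifferentiableOn ℝ v (Ioo a b))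
    (hiv : IntegrableOn (fun z => v z ^ 2 * w z) s)
    (hid : IntegrableOn (fun z => deriv v z ^ 2 * w z) s) :
    m * ((b - a) * v a ^ 2) ≤
      (1 + (b - a)) * (∫ z in s, v z ^ 2 * w z) + (b - a) * ∫ z in s, deriv v z ^ 2 * w z := by
  have hv_sq : IntegrableOn (fun z => v z ^ 2) (Icc a b) := (hv.pow 2).integrableOn_Icc
  have hd_sq : IntegrableOn (fun z => deriv v z ^ 2) (Icc a b) :=
    integrableOn_of_integrableOn_mul_of_le measurableSet_Icc hm hmw
      ((stronglyMeasurable_deriv v).pow 2).aestronglyMeasurable (hid.mono_set habs)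
  have hv_le := const_mul_setIntegral_le_setIntegral_mul hs measurableSet_Icc habs
    (fun z _ => sq_nonneg (v z)) hw hmw hv_sq hiv
  have hd_le := const_mul_setIntegral_le_setIntegral_mul hs measurableSet_Icc habs
    (fun z _ => sq_nonneg (deriv v z)) hw hmw hd_sq hid
  have hlocal := sub_mul_sq_le_integral_sq_add_integral_deriv_sq hab hv hd
    ((intervalIntegrable_iff_integrableOn_Icc_of_le hab).2 hd_sq)
  simp only [intervalIntegral.integral_of_le hab, ← integral_Icc_eq_integral_Ioc] at hlocal
  have : 0 ≤ b - a := sub_nonneg.2 hab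
  calc m * ((b - a) * v a ^ 2)
      ≤ m * ((1 + (b - a)) * (∫ z in Icc a b, v z ^ 2) +
          (b - a) * ∫ z in Icc a b, deriv v z ^ 2) := by gcongr
    _ = (1 + (b - a)) * (m * ∫ z in Icc a b, v z ^ 2) +
          (b - a) * (m * ∫ z in Icc a b, deriv v z ^ 2) := by ring
    _ ≤ _ := by gcongr

lemma abs_le_mul_sqrt_setIntegral_mul {K : ℝ} (hs : MeasurableSet s) (habs : Icc a b ⊆ s)
    (hab : a ≤ b) (hw : ∀ z ∈ s, 0 ≤ w z) (hm : 0 < m) (hmw : ∀ z ∈ Icc a b, m ≤ w z)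
    (hv : ContinuousOn v (Icc a b)) (hd : DifferentiableOn ℝ v (Ioo a b))
    (hiv : IntegrableOn (fun z => v z ^ 2 * w z) s)
    (hid : IntegrableOn (fun z => deriv v z ^ 2 * w z) s)
    (hK : 0 ≤ K) (hKm : 1 + (b - a) ≤ K ^ 2 * (m * (b - a))) :
    |v a| ≤ K * (√(∫ z in s, deriv v z ^ 2 * w z) + √(∫ z in s, v z ^ 2 * w z)) := by
  have hbound := mul_sub_mul_sq_le_setIntegral_mul hs habs hab hw hm hmw hv hd hiv hid
  set A := ∫ z in s, deriv v z ^ 2 * w z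
  set B := ∫ z in s, v z ^ 2 * w z
  have hA : 0 ≤ A := setIntegral_nonneg hs fun z hz => mul_nonneg (sq_nonneg _) (hw z hz)
  have hB : 0 ≤ B := setIntegral_nonneg hs fun z hz => mul_nonneg (sq_nonneg _) (hw z hz)
  have hlen : 0 < 1 + (b - a) := by linarith
  have hAB : A + B ≤ (√A + √B) ^ 2 := by
    rw [add_sq, sq_sqrt hA, sq_sqrt hB]
    linarith [mul_nonneg (sqrt_nonneg A) (sqrt_nonneg B)]
  have hbound_add : m * ((b - a) * v a ^ 2) ≤ (1 + (b - a)) * (√A + √B) ^ 2 :=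
    calc m * ((b - a) * v a ^ 2) ≤ (1 + (b - a)) * (A + B) := by linarith
      _ ≤ (1 + (b - a)) * (√A + √B) ^ 2 := by gcongr
  refine abs_le_of_sq_le_sq (le_of_mul_le_mul_left ?_ hlen) (by positivity)
  calc (1 + (b - a)) * v a ^ 2 ≤ K ^ 2 * (m * (b - a)) * v a ^ 2 := by gcongr
    _ = K ^ 2 * (m * ((b - a) * v a ^ 2)) := by ring
    _ ≤ K ^ 2 * ((1 + (b - a)) * (√A + √B) ^ 2) := by gcongr
    _ = (1 + (b - a)) * (K * (√A + √B)) ^ 2 := by ring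

end Interval

/-- The Gaussian weight of the norm `‖·‖`, meant for `0 < z`; the real exponent `α` stands for
`2 * (n - 1)`. -/
noncomputable def gaussianWeight (α z : ℝ) : ℝ := z ^ α * rexp (-z ^ 2 / 4)

namespace gaussianWeight

variable {α y z : ℝ}

lemma nonneg (hz : 0 ≤ z) : 0 ≤ gaussianWeight α z :=
  mul_nonneg (rpow_nonneg hz α) (exp_nonneg _)

lemma continuous (hα : 0 ≤ α) : Continuous (gaussianWeight α) :=
  (continuous_rpow_const hα).mul (by fun_prop)

lemma rpow_mul_exp_neg_one_le (hα : 0 ≤ α) (hy : 0 ≤ y) (hyz : y ≤ z) (hz : z ≤ 2) :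
    y ^ α * rexp (-1) ≤ gaussianWeight α z := by
  have hz0 : 0 ≤ z := hy.trans hyz
  have : 0 ≤ z ^ α := rpow_nonneg hz0 α
  unfold gaussianWeight
  gcongr
  nlinarith

lemma exp_neg_sq_le {b : ℝ} (hα : 0 ≤ α) (hz : 1 ≤ z) (hzb : z ≤ b) :
    rexp (-b ^ 2 / 4) ≤ gaussianWeight α z :=
  calc rexp (-b ^ 2 / 4) ≤ rexp (-z ^ 2 / 4) := by gcongr
    _ ≤ gaussianWeight α z := le_mul_of_one_le_left (exp_nonneg _) (one_le_rpow hz hα)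

lemma integrable_sq_mul {f : ℝ → ℝ} (hα : 0 ≤ α) (hf : Continuous f) (hs : HasCompactSupport f) :
    Integrable (fun z => f z ^ 2 * gaussianWeight α z) :=
  ((hf.pow 2).mul (continuous hα)).integrable_of_hasCompactSupport
    (hs.comp_left (g := (· ^ 2)) (zero_pow two_ne_zero)).mul_right

end gaussianWeight

section Pointwise

variable {α y : ℝ} {v : ℝ → ℝ}

lemma abs_le_mul_sqrt_gaussianWeight_of_le_one (hα : 0 ≤ α) (hd : DifferentiableOn ℝ v (Ioi 0))
    (hiv : IntegrableOn (fun z => v z ^ 2 * gaussianWeight α z) (Ioi 0))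
    (hid : IntegrableOn (fun z => deriv v z ^ 2 * gaussianWeight α z) (Ioi 0))
    (hy : 0 < y) (hy1 : y ≤ 1) :
    |v y| ≤ 3 * y ^ (-((α + 1) / 2)) *
      (√(∫ z in Ioi 0, deriv v z ^ 2 * gaussianWeight α z) +
        √(∫ z in Ioi 0, v z ^ 2 * gaussianWeight α z)) := by
  have hsub : Icc y (2 * y) ⊆ Ioi 0 := fun z hz => hy.trans_le hz.1
  have hpow : (y ^ (-((α + 1) / 2))) ^ 2 * (y ^ α * y) = 1 := by
    rw [← rpow_mul_natCast hy.le, ← rpow_add_one hy.ne', ← rpow_add hy]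
    norm_num
  have hexp : 2 ≤ 9 * rexp (-1) := by
    rw [exp_neg, ← div_eq_mul_inv, le_div_iff₀ (exp_pos 1)]
    linarith [exp_one_lt_d9]
  refine abs_le_mul_sqrt_setIntegral_mul measurableSet_Ioi hsub (by linarith)
    (fun z hz => gaussianWeight.nonneg (le_of_lt hz)) (m := y ^ α * rexp (-1)) (by positivity)
    (fun z hz => gaussianWeight.rpow_mul_exp_neg_one_le hα hy.le hz.1 (by linarith [hz.2]))
    (hd.continuousOn.mono hsub) (hd.mono (Ioo_subset_Icc_self.trans hsub)) hiv hid
    (by positivity) ?_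
  calc 1 + (2 * y - y) ≤ 9 * rexp (-1) := by linarith
    _ = 9 * rexp (-1) * ((y ^ (-((α + 1) / 2))) ^ 2 * (y ^ α * y)) := by rw [hpow, mul_one]
    _ = (3 * y ^ (-((α + 1) / 2))) ^ 2 * (y ^ α * rexp (-1) * (2 * y - y)) := by ring

lemma abs_le_mul_sqrt_gaussianWeight_of_one_le (hα : 0 ≤ α) (hd : DifferentiableOn ℝ v (Ioi 0))
    (hiv : IntegrableOn (fun z => v z ^ 2 * gaussianWeight α z) (Ioi 0))
    (hid : IntegrableOn (fun z => deriv v z ^ 2 * gaussianWeight α z) (Ioi 0)) (hy : 1 ≤ y) :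
    |v y| ≤ 2 * rexp ((y + 1) ^ 2 / 8) *
      (√(∫ z in Ioi 0, deriv v z ^ 2 * gaussianWeight α z) +
        √(∫ z in Ioi 0, v z ^ 2 * gaussianWeight α z)) := by
  have hsub : Icc y (y + 1) ⊆ Ioi 0 := fun z hz => zero_lt_one.trans_le (hy.trans hz.1)
  have hexp : rexp ((y + 1) ^ 2 / 8) ^ 2 * rexp (-(y + 1) ^ 2 / 4) = 1 := by
    rw [← exp_nat_mul, ← exp_add, exp_eq_one_iff]
    push_cast
    ring
  refine abs_le_mul_sqrt_setIntegral_mul measurableSet_Ioi hsub (by linarith)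
    (fun z hz => gaussianWeight.nonneg (le_of_lt hz)) (exp_pos _)
    (fun z hz => gaussianWeight.exp_neg_sq_le hα (hy.trans hz.1) hz.2)
    (hd.continuousOn.mono hsub) (hd.mono (Ioo_subset_Icc_self.trans hsub)) hiv hid
    (by positivity) ?_
  rw [add_sub_cancel_left, mul_one, mul_pow, mul_assoc, hexp]
  norm_num

theorem weighted_sobolev_bound_general (hα : 0 ≤ α) (hd : DifferentiableOn ℝ v (Ioi 0))
    (hiv : IntegrableOn (fun z => v z ^ 2 * gaussianWeight α z) (Ioi 0))
    (hid : IntegrableOn (fun z => deriv v z ^ 2 * gaussianWeight α z) (Ioi 0)) (hy : 0 < y) :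
    |v y| ≤ 3 * (y ^ (-((α + 1) / 2)) + rexp ((y + 1) ^ 2 / 8)) *
      (√(∫ z in Ioi 0, deriv v z ^ 2 * gaussianWeight α z) +
        √(∫ z in Ioi 0, v z ^ 2 * gaussianWeight α z)) := by
  have hpow : 0 ≤ y ^ (-((α + 1) / 2)) := rpow_nonneg hy.le _
  have hexp : 0 ≤ rexp ((y + 1) ^ 2 / 8) := exp_nonneg _
  rcases le_total y 1 with hy1 | hy1
  · refine (abs_le_mul_sqrt_gaussianWeight_of_le_one hα hd hiv hid hy hy1).trans ?_
    gcongr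
    linarith
  · refine (abs_le_mul_sqrt_gaussianWeight_of_one_le hα hd hiv hid hy1).trans ?_
    gcongr ?_ * _
    linarith

end Pointwise

/-- Weighted Sobolev-type pointwise bound: there is `C = C(n) > 0` such that every `C¹`
compactly supported function `v` on `(0,∞)` satisfies, for all `y > 0`,
`|v(y)| ≤ C (y^(−(n−1/2)) + e^((y+1)²/4)) (‖v'‖ + ‖v‖)`, where
`‖f‖² = ∫₀^∞ f(z)² z^(2(n−1)) e^(−z²/4) dz`. -/
theorem weighted_sobolev_bound (n : ℕ) (hn : 4 ≤ n) :
    ∃ C : ℝ, 0 < C ∧ ∀ v : ℝ → ℝ, ContDiff ℝ 1 v → HasCompactSupport v →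
      tsupport v ⊆ Set.Ioi 0 → ∀ y : ℝ, 0 < y →
        |v y| ≤ C * (y ^ (-((n : ℝ) - 1 / 2)) + Real.exp ((y + 1) ^ 2 / 4)) *
          (Real.sqrt (∫ z in Set.Ioi (0 : ℝ),
              (deriv v z) ^ 2 * z ^ (2 * (n - 1)) * Real.exp (-z ^ 2 / 4)) +
           Real.sqrt (∫ z in Set.Ioi (0 : ℝ),
              (v z) ^ 2 * z ^ (2 * (n - 1)) * Real.exp (-z ^ 2 / 4))) := by
  have hexponent : ((2 * (n - 1) : ℕ) + 1 : ℝ) / 2 = n - 1 / 2 := by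
    push_cast [Nat.cast_sub (by omega : 1 ≤ n)]
    ring
  refine ⟨3, by norm_num, fun v hv hs _ y hy => ?_⟩
  have hα : (0 : ℝ) ≤ (2 * (n - 1) : ℕ) := Nat.cast_nonneg _
  have hbound := weighted_sobolev_bound_general hα (hv.differentiable one_ne_zero).differentiableOn
    (gaussianWeight.integrable_sq_mul hα hv.continuous hs).integrableOn
    (gaussianWeight.integrable_sq_mul hα (hv.continuous_deriv le_rfl) hs.deriv).integrableOn hy
  simp only [gaussianWeight, rpow_natCast, ← mul_assoc, hexponent] at hbound
  refine hbound.trans ?_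
  gcongr
  norm_num
end

section
/- Let λ₃ > 0 and let (λ_i)_{i∈ℕ} be real numbers with λ_i ≥ λ₃ for all i. Let s₀ < s̊ be reals, let (h_i)_{i∈ℕ} be a square-summable sequence, and let f_i : [s₀, s̊] → ℝ be continuous functions such that ξ ↦ Σ_i f_i(ξ)² is finite and continuous on [s₀, s̊]. Define v_i(s) := e^{−λ_i(s−s₀)} h_i + ∫_{s₀}^s e^{−λ_i(s−ξ)} f_i(ξ) dξ. Then for every δ ∈ (0,1) and every s ∈ [s₀, s̊]: Σ_i v_i(s)² ≤ e^{−2(1−δ)λ₃(s−s₀)} Σ_i h_i² + (1/(2δλ₃)) ∫_{s₀}^s e^{−2(1−δ)λ₃(s−ξ)} Σ_i f_i(ξ)² dξ. Moreover, if in addition Σ_i λ_i h_i² < ∞, then Σ_i λ_i v_i(s)² ≤ e^{−2(1−δ)λ₃(s−s₀)} Σ_i λ_i h_i² + (1/(2δ)) ∫_{s₀}^s e^{−2(1−δ)λ₃(s−ξ)} Σ_i f_i(ξ)² dξ. -/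
open Real Filter Topology

/-!
For `m > 0` the mass `e^(-m(s-s₀))` at the initial datum and the density `m e^(-m(s-ξ))` on
`[s₀, s]` have total weight `1`, and a coefficient `u(s) = e^(-a(s-s₀)) c + ∫ e^(-a(s-ξ)) g(ξ) dξ`
is an average of some `G` against these weights. Averaging `2 u(s) G ≤ u(s)² + G²` gives
`u(s)² ≤ e^((m-2a)(s-s₀)) c² + m⁻¹ ∫ e^((m-2a)(s-ξ)) g(ξ)² dξ`. With `a = λᵢ` and `m = 2δλᵢ` the
rate is `-2(1-δ)λᵢ ≤ -2(1-δ)λ₃`; weighting the modes by `1` or by `λᵢ` and summing gives both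
estimates.
-/

open MeasureTheory Set

section TsumIntegral

variable {α ι : Type*} [MeasurableSpace α] {μ : Measure α}

lemma sum_integral_le_integral_tsum {φ : ι → α → ℝ} (hφ : ∀ i, Integrable (φ i) μ)
    (hφ_nonneg : ∀ i x, 0 ≤ φ i x) (hsum : ∀ᵐ x ∂μ, Summable fun i => φ i x)
    (hΦ : Integrable (fun x => ∑' i, φ i x) μ) (S : Finset ι) :
    ∑ i ∈ S, ∫ x, φ i x ∂μ ≤ ∫ x, ∑' i, φ i x ∂μ := by
  rw [← integral_finsetSum S fun i _ => hφ i]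
  exact integral_mono_ae (integrable_finsetSum S fun i _ => hφ i) hΦ
    (hsum.mono fun x hx => hx.sum_le_tsum S fun i _ => hφ_nonneg i x)

lemma memLp_two_of_integrable_tsum_sq {f : ι → α → ℝ} {i : ι}
    (hf : AEStronglyMeasurable (f i) μ) (hsum : ∀ᵐ x ∂μ, Summable fun i => f i x ^ 2)
    (hF : Integrable (fun x => ∑' i, f i x ^ 2) μ) : MemLp (f i) 2 μ := by
  refine (memLp_two_iff_integrable_sq hf).2 (hF.mono' (hf.pow 2) (hsum.mono fun x hx => ?_))
  rw [norm_of_nonneg (sq_nonneg _)]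
  exact hx.le_tsum i fun j _ => sq_nonneg _

end TsumIntegral

/-- The solution at time `s` of the scalar Cauchy problem `u' + a u = g`, `u(s₀) = c`, as given by
Duhamel's formula; it is one eigenfunction coefficient of the solution of `∂_s v + L v = f`. The
integral is a Bochner integral, so the formula is meaningful only for `g` integrable between `s₀`
and `s`. -/
noncomputable def duhamel (a c s₀ : ℝ) (g : ℝ → ℝ) (s : ℝ) : ℝ :=
  exp (-a * (s - s₀)) * c + ∫ ξ in s₀..s, exp (-a * (s - ξ)) * g ξ

section Mode

variable {a c k m s₀ s : ℝ} {g : ℝ → ℝ}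

lemma integral_mul_exp_neg_mul_sub (m s₀ s : ℝ) :
    ∫ ξ in s₀..s, m * exp (-m * (s - ξ)) = 1 - exp (-m * (s - s₀)) := by
  have hderiv : ∀ ξ ∈ uIcc s₀ s,
      HasDerivAt (fun ξ => exp (-m * (s - ξ))) (m * exp (-m * (s - ξ))) ξ := fun ξ _ =>
    (((hasDerivAt_id ξ).const_sub s).const_mul (-m)).exp.congr_deriv (by simp only [id_eq]; ring)
  rw [intervalIntegral.integral_eq_sub_of_hasDerivAt hderiv
    (Continuous.intervalIntegrable (by fun_prop) _ _), sub_self, mul_zero, exp_zero]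

lemma two_mul_exp_mul_le {r : ℝ} (hr : 0 < r) (a m t x y : ℝ) :
    2 * x * (exp (-a * t) * y) ≤
      x ^ 2 * (r * exp (-m * t)) + r⁻¹ * (exp ((m - 2 * a) * t) * y ^ 2) := by
  have hsplit : exp (-a * t) = exp (-m * t / 2) * exp ((m - 2 * a) * t / 2) := by
    rw [← exp_add]; ring_nf
  have hsq (z : ℝ) : exp z = exp (z / 2) ^ 2 := by rw [← exp_nat_mul]; ring_nf
  rw [hsplit, hsq (-m * t), hsq ((m - 2 * a) * t)]
  have hsquare := mul_nonneg (inv_pos.2 hr).le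
    (sq_nonneg (r * exp (-m * t / 2) * x - exp ((m - 2 * a) * t / 2) * y))
  field_simp at hsquare ⊢
  linarith

lemma intervalIntegrable_exp_mul (hg : IntervalIntegrable g volume s₀ s) (k : ℝ) :
    IntervalIntegrable (fun ξ => exp (k * (s - ξ)) * g ξ) volume s₀ s :=
  hg.continuousOn_mul (by fun_prop)

lemma sq_duhamel_le (hs : s₀ ≤ s) (hm : 0 < m) (hg : MemLp g 2 (volume.restrict (Ioc s₀ s))) :
    duhamel a c s₀ g s ^ 2 ≤ exp ((m - 2 * a) * (s - s₀)) * c ^ 2 +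
      m⁻¹ * ∫ ξ in s₀..s, exp ((m - 2 * a) * (s - ξ)) * g ξ ^ 2 := by
  set u := duhamel a c s₀ g s
  have hg_int : IntervalIntegrable g volume s₀ s :=
    (intervalIntegrable_iff_integrableOn_Ioc_of_le hs).2 (hg.integrable one_le_two)
  have hg_sq : IntervalIntegrable (fun ξ => g ξ ^ 2) volume s₀ s :=
    (intervalIntegrable_iff_integrableOn_Ioc_of_le hs).2 hg.integrable_sq
  have hweight : IntervalIntegrable (fun ξ => u ^ 2 * (m * exp (-m * (s - ξ)))) volume s₀ s :=
    Continuous.intervalIntegrable (by fun_prop) _ _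
  have hsource := (intervalIntegrable_exp_mul hg_sq (m - 2 * a)).const_mul m⁻¹
  have initial_le : 2 * u * (exp (-a * (s - s₀)) * c) ≤
      u ^ 2 * exp (-m * (s - s₀)) + exp ((m - 2 * a) * (s - s₀)) * c ^ 2 := by
    simpa only [one_mul, inv_one] using two_mul_exp_mul_le one_pos a m (s - s₀) u c
  have source_le : 2 * u * ∫ ξ in s₀..s, exp (-a * (s - ξ)) * g ξ ≤
      u ^ 2 * (1 - exp (-m * (s - s₀))) +
        m⁻¹ * ∫ ξ in s₀..s, exp ((m - 2 * a) * (s - ξ)) * g ξ ^ 2 := by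
    rw [← integral_mul_exp_neg_mul_sub, ← intervalIntegral.integral_const_mul,
      ← intervalIntegral.integral_const_mul, ← intervalIntegral.integral_const_mul,
      ← intervalIntegral.integral_add hweight hsource]
    exact intervalIntegral.integral_mono_on hs
      ((intervalIntegrable_exp_mul hg_int (-a)).const_mul _) (hweight.add hsource)
      fun ξ _ => two_mul_exp_mul_le hm a m (s - ξ) u (g ξ)
  have hsplit : 2 * u * u = 2 * u * (exp (-a * (s - s₀)) * c) +
      2 * u * ∫ ξ in s₀..s, exp (-a * (s - ξ)) * g ξ := by rw [← mul_add]; rfl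
  linarith

lemma mul_sq_duhamel_le {w C : ℝ} (hs : s₀ ≤ s) (hm : 0 < m) (hk : m - 2 * a ≤ k) (hw : 0 ≤ w)
    (hwC : w ≤ C * m) (hg : MemLp g 2 (volume.restrict (Ioc s₀ s))) :
    w * duhamel a c s₀ g s ^ 2 ≤ exp (k * (s - s₀)) * (w * c ^ 2) +
      C * ∫ ξ in s₀..s, exp (k * (s - ξ)) * g ξ ^ 2 := by
  have hg_sq : IntervalIntegrable (fun ξ => g ξ ^ 2) volume s₀ s :=
    (intervalIntegrable_iff_integrableOn_Ioc_of_le hs).2 hg.integrable_sq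
  have hintegral : ∫ ξ in s₀..s, exp ((m - 2 * a) * (s - ξ)) * g ξ ^ 2 ≤
      ∫ ξ in s₀..s, exp (k * (s - ξ)) * g ξ ^ 2 :=
    intervalIntegral.integral_mono_on hs (intervalIntegrable_exp_mul hg_sq _)
      (intervalIntegrable_exp_mul hg_sq _)
      fun ξ hξ => by have := hξ.2; gcongr
  have hintegral_nonneg : 0 ≤ ∫ ξ in s₀..s, exp (k * (s - ξ)) * g ξ ^ 2 :=
    intervalIntegral.integral_nonneg hs fun ξ _ => by positivity
  calc w * duhamel a c s₀ g s ^ 2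
      ≤ w * (exp ((m - 2 * a) * (s - s₀)) * c ^ 2 +
          m⁻¹ * ∫ ξ in s₀..s, exp ((m - 2 * a) * (s - ξ)) * g ξ ^ 2) := by
        gcongr; exact sq_duhamel_le hs hm hg
    _ ≤ w * (exp (k * (s - s₀)) * c ^ 2 +
          m⁻¹ * ∫ ξ in s₀..s, exp (k * (s - ξ)) * g ξ ^ 2) := by gcongr
    _ = exp (k * (s - s₀)) * (w * c ^ 2) +
          w / m * ∫ ξ in s₀..s, exp (k * (s - ξ)) * g ξ ^ 2 := by ring
    _ ≤ _ := by gcongr; exact (div_le_iff₀ hm).2 hwC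

end Mode

section Modes

variable {ι : Type*} {s₀ s : ℝ} {f : ι → ℝ → ℝ}

lemma sum_integral_exp_mul_sq_le (hs : s₀ ≤ s)
    (hf : ∀ i, AEStronglyMeasurable (f i) (volume.restrict (Ioc s₀ s)))
    (hfsum : ∀ᵐ ξ ∂volume.restrict (Ioc s₀ s), Summable fun i => f i ξ ^ 2)
    (hF : IntegrableOn (fun ξ => ∑' i, f i ξ ^ 2) (Ioc s₀ s)) (k : ℝ) (S : Finset ι) :
    ∑ i ∈ S, ∫ ξ in s₀..s, exp (k * (s - ξ)) * f i ξ ^ 2 ≤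
      ∫ ξ in s₀..s, exp (k * (s - ξ)) * ∑' i, f i ξ ^ 2 := by
  have hexp_mul {φ : ℝ → ℝ} (hφ : IntegrableOn φ (Ioc s₀ s)) :
      IntegrableOn (fun ξ => exp (k * (s - ξ)) * φ ξ) (Ioc s₀ s) := by
    rw [← intervalIntegrable_iff_integrableOn_Ioc_of_le hs] at hφ ⊢
    exact intervalIntegrable_exp_mul hφ k
  simp only [intervalIntegral.integral_of_le hs, ← tsum_mul_left]
  refine sum_integral_le_integral_tsum
    (fun i => hexp_mul (memLp_two_of_integrable_tsum_sq (hf i) hfsum hF).integrable_sq)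
    (fun i ξ => by positivity) (hfsum.mono fun ξ hξ => hξ.mul_left _) ?_ S
  simpa only [tsum_mul_left, IntegrableOn] using hexp_mul hF

theorem summable_and_tsum_mul_sq_duhamel_le {a c m w : ι → ℝ} {k C : ℝ} (hs : s₀ ≤ s)
    (hm : ∀ i, 0 < m i) (hk : ∀ i, m i - 2 * a i ≤ k) (hw : ∀ i, 0 ≤ w i) (hC : 0 ≤ C)
    (hwC : ∀ i, w i ≤ C * m i) (hc : Summable fun i => w i * c i ^ 2)
    (hf : ∀ i, AEStronglyMeasurable (f i) (volume.restrict (Ioc s₀ s)))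
    (hfsum : ∀ᵐ ξ ∂volume.restrict (Ioc s₀ s), Summable fun i => f i ξ ^ 2)
    (hF : IntegrableOn (fun ξ => ∑' i, f i ξ ^ 2) (Ioc s₀ s)) :
    (Summable fun i => w i * duhamel (a i) (c i) s₀ (f i) s ^ 2) ∧
      ∑' i, w i * duhamel (a i) (c i) s₀ (f i) s ^ 2 ≤
        exp (k * (s - s₀)) * ∑' i, w i * c i ^ 2 +
          C * ∫ ξ in s₀..s, exp (k * (s - ξ)) * ∑' i, f i ξ ^ 2 := by
  have hnonneg (x : ι → ℝ) (i : ι) : 0 ≤ w i * x i ^ 2 := mul_nonneg (hw i) (sq_nonneg _)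
  have sum_le (S : Finset ι) : ∑ i ∈ S, w i * duhamel (a i) (c i) s₀ (f i) s ^ 2 ≤
      exp (k * (s - s₀)) * ∑' i, w i * c i ^ 2 +
        C * ∫ ξ in s₀..s, exp (k * (s - ξ)) * ∑' i, f i ξ ^ 2 := by
    calc ∑ i ∈ S, w i * duhamel (a i) (c i) s₀ (f i) s ^ 2
        ≤ ∑ i ∈ S, (exp (k * (s - s₀)) * (w i * c i ^ 2) +
            C * ∫ ξ in s₀..s, exp (k * (s - ξ)) * f i ξ ^ 2) :=
          Finset.sum_le_sum fun i _ => mul_sq_duhamel_le hs (hm i) (hk i) (hw i) (hwC i)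
            (memLp_two_of_integrable_tsum_sq (hf i) hfsum hF)
      _ = exp (k * (s - s₀)) * ∑ i ∈ S, w i * c i ^ 2 +
            C * ∑ i ∈ S, ∫ ξ in s₀..s, exp (k * (s - ξ)) * f i ξ ^ 2 := by
          rw [Finset.sum_add_distrib, Finset.mul_sum, Finset.mul_sum]
      _ ≤ _ := by
          gcongr
          · exact hc.sum_le_tsum S fun i _ => hnonneg c i
          · exact sum_integral_exp_mul_sq_le hs hf hfsum hF k S
  exact ⟨summable_of_sum_le (hnonneg _) sum_le, Real.tsum_le_of_sum_le (hnonneg _) sum_le⟩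

theorem energy_estimates_general {lam₃ : ℝ} (hlam₃ : 0 < lam₃) {lam : ι → ℝ}
    (hlam : ∀ i, lam₃ ≤ lam i) (hs : s₀ ≤ s) {h : ι → ℝ} (hh : Summable fun i => h i ^ 2)
    (hf : ∀ i, AEStronglyMeasurable (f i) (volume.restrict (Ioc s₀ s)))
    (hfsum : ∀ᵐ ξ ∂volume.restrict (Ioc s₀ s), Summable fun i => f i ξ ^ 2)
    (hF : IntegrableOn (fun ξ => ∑' i, f i ξ ^ 2) (Ioc s₀ s))
    {δ : ℝ} (hδ : 0 < δ) (hδ_le : δ ≤ 1) :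
    ((Summable fun i => duhamel (lam i) (h i) s₀ (f i) s ^ 2) ∧
      ∑' i, duhamel (lam i) (h i) s₀ (f i) s ^ 2 ≤
        exp (-2 * (1 - δ) * lam₃ * (s - s₀)) * ∑' i, h i ^ 2 +
          1 / (2 * δ * lam₃) *
            ∫ ξ in s₀..s, exp (-2 * (1 - δ) * lam₃ * (s - ξ)) * ∑' i, f i ξ ^ 2) ∧
    ((Summable fun i => lam i * h i ^ 2) →
      (Summable fun i => lam i * duhamel (lam i) (h i) s₀ (f i) s ^ 2) ∧
      ∑' i, lam i * duhamel (lam i) (h i) s₀ (f i) s ^ 2 ≤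
        exp (-2 * (1 - δ) * lam₃ * (s - s₀)) * ∑' i, lam i * h i ^ 2 +
          1 / (2 * δ) *
            ∫ ξ in s₀..s, exp (-2 * (1 - δ) * lam₃ * (s - ξ)) * ∑' i, f i ξ ^ 2) := by
  have hpos (i : ι) : 0 < lam i := hlam₃.trans_le (hlam i)
  have hm (i : ι) : 0 < 2 * δ * lam i := mul_pos (by positivity) (hpos i)
  have hrate (i : ι) : 2 * δ * lam i - 2 * lam i ≤ -2 * (1 - δ) * lam₃ := by
    linarith [mul_le_mul_of_nonneg_left (hlam i) (sub_nonneg.2 hδ_le)]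
  have hunit (i : ι) : 1 ≤ 1 / (2 * δ * lam₃) * (2 * δ * lam i) := by
    rw [one_div_mul_eq_div, one_le_div (by positivity)]
    gcongr
    exact hlam i
  have hlam_eq (i : ι) : lam i = 1 / (2 * δ) * (2 * δ * lam i) := by field_simp
  constructor
  · simpa only [one_mul] using summable_and_tsum_mul_sq_duhamel_le (w := fun _ => 1) hs hm hrate
      (fun _ => zero_le_one) (by positivity) hunit (by simpa only [one_mul] using hh) hf hfsum hF
  · exact fun hh_lam => summable_and_tsum_mul_sq_duhamel_le hs hm hrate (fun i => (hpos i).le)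
      (by positivity) (fun i => (hlam_eq i).le) hh_lam hf hfsum hF

end Modes

/-- Energy estimates for the eigenfunction coefficients
`v_i(s) = e^(−λ_i(s−s₀)) h_i + ∫_{s₀}^s e^(−λ_i(s−ξ)) f_i(ξ) dξ` of the Cauchy problem
`∂_s v + L v = f`, when all eigenvalues satisfy `λ_i ≥ λ₃ > 0`. -/
theorem energy_estimates (lam₃ : ℝ) (hlam₃ : 0 < lam₃)
    (lam : ℕ → ℝ) (hlam : ∀ i : ℕ, lam₃ ≤ lam i)
    (s₀ s' : ℝ) (hs : s₀ < s')
    (h : ℕ → ℝ) (hh : Summable (fun i : ℕ => (h i) ^ 2))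
    (f : ℕ → ℝ → ℝ) (hfc : ∀ i : ℕ, ContinuousOn (f i) (Set.Icc s₀ s'))
    (hfsum : ∀ ξ ∈ Set.Icc s₀ s', Summable (fun i : ℕ => (f i ξ) ^ 2))
    (hfF : ContinuousOn (fun ξ : ℝ => ∑' i : ℕ, (f i ξ) ^ 2) (Set.Icc s₀ s'))
    (v : ℕ → ℝ → ℝ)
    (hv : ∀ (i : ℕ) (s : ℝ), v i s =
      Real.exp (-(lam i) * (s - s₀)) * h i +
        ∫ ξ in s₀..s, Real.exp (-(lam i) * (s - ξ)) * f i ξ) :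
    ∀ δ : ℝ, 0 < δ → δ < 1 → ∀ s ∈ Set.Icc s₀ s',
      ((∑' i : ℕ, (v i s) ^ 2) ≤
        Real.exp (-2 * (1 - δ) * lam₃ * (s - s₀)) * (∑' i : ℕ, (h i) ^ 2) +
          (1 / (2 * δ * lam₃)) *
            ∫ ξ in s₀..s,
              Real.exp (-2 * (1 - δ) * lam₃ * (s - ξ)) * (∑' i : ℕ, (f i ξ) ^ 2)) ∧
      (Summable (fun i : ℕ => lam i * (h i) ^ 2) →
        (∑' i : ℕ, lam i * (v i s) ^ 2) ≤
          Real.exp (-2 * (1 - δ) * lam₃ * (s - s₀)) * (∑' i : ℕ, lam i * (h i) ^ 2) +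
            (1 / (2 * δ)) *
              ∫ ξ in s₀..s,
                Real.exp (-2 * (1 - δ) * lam₃ * (s - ξ)) * (∑' i : ℕ, (f i ξ) ^ 2)) := by
  intro δ hδ hδ1 s hmem
  have hsub : Ioc s₀ s ⊆ Icc s₀ s' := Ioc_subset_Icc_self.trans (Icc_subset_Icc_right hmem.2)
  have key := energy_estimates_general hlam₃ hlam hmem.1 hh
    (fun i => ((hfc i).mono hsub).aestronglyMeasurable measurableSet_Ioc)
    (ae_restrict_of_forall_mem measurableSet_Ioc fun ξ hξ => hfsum ξ (hsub hξ))
    (hfF.integrableOn_Icc.mono_set hsub) hδ hδ1.le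
  simp only [hv]
  exact ⟨key.1.2, fun hh_lam => (key.2 hh_lam).2⟩
end

section
/- Let η : ℝ → ℝ be a smooth, non-increasing function with 0 ≤ η ≤ 1, η(r) = 1 for r ≤ 0, η(r) = 0 for r ≥ 1, and such that all derivatives of η vanish at r = 1. Then there exists a constant C > 0 such that η'(r)² ≤ C·η(r) for all r ∈ ℝ. -/
open Real Filter Topology

/-!
If `f ≥ 0` has a `K`-Lipschitz derivative, then for every `x`, `v` the parabola
`t ↦ f x + t f'(x)v + K/2 ‖v‖² t²` lies above `t ↦ f (x + t v)`, so it is nonnegative and its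
discriminant `(f'(x)v)² - 2 K ‖v‖² f x` is at most zero. The derivative of a cut-off is
Lipschitz because it is `C¹` with compact support.
-/

section

variable {E F : Type*} [NormedAddCommGroup E] [NormedSpace ℝ E]
  [NormedAddCommGroup F] [NormedSpace ℝ F] {K : NNReal}

lemma norm_add_sub_sub_fderiv_le_of_lipschitzWith_fderiv {f : E → F} (hf : Differentiable ℝ f)
    (hK : LipschitzWith K (fderiv ℝ f)) (x v : E) :
    ‖f (x + v) - f x - fderiv ℝ f x v‖ ≤ K / 2 * ‖v‖ ^ 2 := by
  have hline (t : ℝ) : HasDerivAt (fun t : ℝ => x + t • v) v t := by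
    simpa using ((hasDerivAt_id t).smul_const v).const_add x
  have hrem (t : ℝ) : HasDerivAt (fun t : ℝ => f (x + t • v) - f x - t • fderiv ℝ f x v)
      (fderiv ℝ f (x + t • v) v - fderiv ℝ f x v) t := by
    simpa using (((hf _).hasFDerivAt.comp_hasDerivAt t (hline t)).sub_const (f x)).fun_sub
      ((hasDerivAt_id t).smul_const (fderiv ℝ f x v))
  have hbound (t : ℝ) :
      HasDerivAt (fun t : ℝ => K / 2 * ‖v‖ ^ 2 * t ^ 2) (K * ‖v‖ ^ 2 * t) t :=
    ((hasDerivAt_pow 2 t).const_mul _).congr_deriv (by push_cast; ring)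
  have hderiv_le (t : ℝ) (ht : t ∈ Set.Ico (0 : ℝ) 1) :
      ‖fderiv ℝ f (x + t • v) v - fderiv ℝ f x v‖ ≤ K * ‖v‖ ^ 2 * t :=
    calc ‖fderiv ℝ f (x + t • v) v - fderiv ℝ f x v‖
        ≤ ‖fderiv ℝ f (x + t • v) - fderiv ℝ f x‖ * ‖v‖ :=
          (fderiv ℝ f (x + t • v) - fderiv ℝ f x).le_opNorm v
      _ ≤ K * ‖x + t • v - x‖ * ‖v‖ := by gcongr; exact hK.norm_sub_le _ _
      _ = K * ‖v‖ ^ 2 * t := by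
          rw [add_sub_cancel_left, norm_smul, Real.norm_of_nonneg ht.1]; ring
  simpa using image_norm_le_of_norm_deriv_right_le_deriv_boundary
    (fun t _ => (hrem t).continuousAt.continuousWithinAt) (fun t _ => (hrem t).hasDerivWithinAt)
    (by simp) hbound hderiv_le (Set.right_mem_Icc.2 zero_le_one)

lemma norm_fderiv_sq_le_of_nonneg_of_lipschitzWith_fderiv {f : E → ℝ} (hf : Differentiable ℝ f)
    (hK : LipschitzWith K (fderiv ℝ f)) (hnonneg : ∀ x, 0 ≤ f x) (x : E) :
    ‖fderiv ℝ f x‖ ^ 2 ≤ 2 * K * f x := by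
  have hparabola (v : E) (t : ℝ) :
      0 ≤ K / 2 * ‖v‖ ^ 2 * (t * t) + fderiv ℝ f x v * t + f x := by
    have htaylor := (le_abs_self _).trans
      (norm_add_sub_sub_fderiv_le_of_lipschitzWith_fderiv hf hK x (t • v))
    rw [map_smul, smul_eq_mul, norm_smul, mul_pow, Real.norm_eq_abs, sq_abs] at htaylor
    linarith [hnonneg (x + t • v)]
  have hdiscrim (v : E) : fderiv ℝ f x v ^ 2 ≤ 2 * K * f x * ‖v‖ ^ 2 := by
    have h := discrim_le_zero (hparabola v)
    rw [discrim] at h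
    linarith
  have hC : 0 ≤ 2 * K * f x := mul_nonneg (by positivity) (hnonneg x)
  have hnorm : ‖fderiv ℝ f x‖ ≤ √(2 * K * f x) :=
    ContinuousLinearMap.opNorm_le_bound _ (Real.sqrt_nonneg _) fun v => by
      rw [← Real.sqrt_sq (norm_nonneg v), ← Real.sqrt_mul hC]
      exact Real.abs_le_sqrt (hdiscrim v)
  exact (Real.le_sqrt (norm_nonneg _) hC).1 hnorm

lemma hasCompactSupport_fderiv_of_eq_const_of_le_of_ge {f : ℝ → F} {a b : ℝ} {c d : F}
    (ha : ∀ r ≤ a, f r = c) (hb : ∀ r, b ≤ r → f r = d) :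
    HasCompactSupport (fderiv ℝ f) := by
  refine HasCompactSupport.intro (isCompact_Icc (a := a) (b := b)) fun r hr => ?_
  obtain hr | hr : r < a ∨ b < r := by rwa [Set.mem_Icc, not_and_or, not_le, not_le] at hr
  · have hconst : f =ᶠ[𝓝 r] fun _ => c := by
      filter_upwards [Iio_mem_nhds hr] with y hy using ha y hy.le
    rw [hconst.fderiv_eq, fderiv_const_apply]
  · have hconst : f =ᶠ[𝓝 r] fun _ => d := by
      filter_upwards [Ioi_mem_nhds hr] with y hy using hb y hy.le
    rw [hconst.fderiv_eq, fderiv_const_apply]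

theorem cutoff_quotient_bounded_general {f : E → ℝ} (hf : ContDiff ℝ 2 f)
    (hnonneg : ∀ x, 0 ≤ f x) (hsupp : HasCompactSupport (fderiv ℝ f)) :
    ∃ C : ℝ, 0 < C ∧ ∀ x, ‖fderiv ℝ f x‖ ^ 2 ≤ C * f x := by
  obtain ⟨K, hK⟩ := (hf.fderiv_right (m := 1) (by norm_num)).lipschitzWith_of_hasCompactSupport
    hsupp one_ne_zero
  refine ⟨2 * K + 1, by positivity, fun x => ?_⟩
  linarith [hnonneg x, norm_fderiv_sq_le_of_nonneg_of_lipschitzWith_fderiv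
    (hf.differentiable two_ne_zero) hK hnonneg x]

end

/-- For a smooth, non-increasing cut-off `η` with `0 ≤ η ≤ 1`, `η = 1` on `(−∞,0]`,
`η = 0` on `[1,∞)`, vanishing to infinite order at `r = 1`, the quotient `(η')²/η`
is bounded: there is `C > 0` with `η'(r)² ≤ C η(r)` for all `r`. -/
theorem cutoff_quotient_bounded (η : ℝ → ℝ)
    (hsmooth : ContDiff ℝ (⊤ : ℕ∞) η)
    (hmono : Antitone η)
    (hrange : ∀ r : ℝ, 0 ≤ η r ∧ η r ≤ 1)
    (h0 : ∀ r : ℝ, r ≤ 0 → η r = 1)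
    (h1 : ∀ r : ℝ, 1 ≤ r → η r = 0)
    (hflat : ∀ m : ℕ, 1 ≤ m → iteratedDeriv m η 1 = 0) :
    ∃ C : ℝ, 0 < C ∧ ∀ r : ℝ, (deriv η r) ^ 2 ≤ C * η r := by
  simpa only [← norm_deriv_eq_norm_fderiv, Real.norm_eq_abs, sq_abs] using
    cutoff_quotient_bounded_general (contDiff_infty.1 hsmooth 2)
      (fun r => (hrange r).1) (hasCompactSupport_fderiv_of_eq_const_of_le_of_ge h0 h1)
end

section
/- Let n ≥ 2 be an integer, α < 1 and σ > 0. Let ψ̂ : (0,∞) → ℝ be a positive C² function satisfying ψ̂''(r)/(1+ψ̂'(r)²) + (n−1)(ψ̂'(r)/r − 1/ψ̂(r)) = 0 on (0,∞). Let I ⊂ (0,∞) be an interval and λ, μ : I → (0,∞) differentiable. Define W(z,τ) := λ(τ)^{1/(1−α)} ψ̂(z/(λ(τ)^{1/(1−α)} μ(τ))). Then W is positive, and for all τ ∈ I and z > 0, writing r := z/(λ(τ)^{1/(1−α)} μ(τ)): ∂_τ W − [∂²_z W/(1+(∂_z W)²) + (n−1)(∂_z W/z − 1/W) + ((1/2+σ)/(2στ))(−z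 ∂_z W + W)] = (−((1/2+σ)/(2στ)) λ(τ)^{1/(1−α)} + (λ(τ)^{α/(1−α)}/(1−α)) λ'(τ)) · (ψ̂(r) − r ψ̂'(r)) − (λ(τ)^{1/(1−α)}/μ(τ)) μ'(τ) · (r ψ̂'(r)) + ((μ(τ)²−1)/(λ(τ)^{1/(1−α)} μ(τ)²)) · [ψ̂''(r)/((1+ψ̂'(r)²)(1+(ψ̂'(r)/μ(τ))²)) + (n−1) ψ̂'(r)/r]. -/
open Real Filter Topology Set

/-!
The operator `profileVelocity` is homogeneous of degree `-1` under scaling both the values and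
the variable by `L`. An extra stretch of the variable by `m` breaks this homogeneity only in the two
terms that contain derivatives, and by a factor `m ^ 2 - 1`; since `ψ` is stationary, this failure
is the whole elliptic part of the defect. The remaining terms come from the chain rule: both a
change of `L` and the drift `w - z w'` act on the profile as multiples of the generator
`ψ - r ψ'` of dilations, whereas a change of `m` acts as a multiple of `r ψ'`.
-/

/-- The right-hand side `w'' / (1 + w' ^ 2) + κ (w' / z - 1 / w)` of mean curvature
flow for an `O(n) × O(n)`-symmetric hypersurface with profile `w`, where `κ = n - 1`; its zeros
are the profiles of minimal hypersurfaces. -/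
noncomputable def profileVelocity (κ : ℝ) (w : ℝ → ℝ) (z : ℝ) : ℝ :=
  deriv (deriv w) z / (1 + (deriv w z) ^ 2) + κ * (deriv w z / z - 1 / w z)

/-- The profile obtained from `f` by scaling its graph by `L` in both directions and then
stretching the variable by `m`, so that `barrier_defect_identity` is about
`L = λ(τ)^(1/(1−α))` and `m = μ(τ)`. -/
noncomputable def dilate (L m : ℝ) (f : ℝ → ℝ) (z : ℝ) : ℝ :=
  L * f (z / (L * m))

section Dilation

variable {L m : ℝ}

lemma deriv_dilate (hL : L ≠ 0) (f : ℝ → ℝ) (z : ℝ) :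
    deriv (dilate L m f) z = deriv f (z / (L * m)) / m := by
  have hcomp : deriv (fun z => f (z / (L * m))) z = (L * m)⁻¹ * deriv f (z / (L * m)) := by
    simpa only [div_eq_inv_mul, smul_eq_mul] using deriv_comp_mul_left (L * m)⁻¹ f z
  calc deriv (dilate L m f) z = L * ((L * m)⁻¹ * deriv f (z / (L * m))) := by
        rw [← hcomp]; exact deriv_const_mul_field L
    _ = deriv f (z / (L * m)) / m := by field_simp

lemma deriv_deriv_dilate (hL : L ≠ 0) (f : ℝ → ℝ) (z : ℝ) :
    deriv (deriv (dilate L m f)) z = deriv (deriv f) (z / (L * m)) / (L * m ^ 2) := by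
  have hderiv : deriv (dilate L m f) = fun z => (L * m)⁻¹ * dilate L m (deriv f) z := by
    funext z
    rw [deriv_dilate hL, dilate]
    field_simp
  rw [hderiv, deriv_const_mul_field, deriv_dilate hL]
  field_simp

lemma dilate_sub_mul_deriv_dilate (hL : L ≠ 0) (f : ℝ → ℝ) (z : ℝ) :
    dilate L m f z - z * deriv (dilate L m f) z =
      L * (f (z / (L * m)) - z / (L * m) * deriv f (z / (L * m))) := by
  rw [deriv_dilate hL, dilate]
  field_simp

lemma profileVelocity_dilate (hL : L ≠ 0) (hm : m ≠ 0) (κ : ℝ) (f : ℝ → ℝ) {z r : ℝ}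
    (hr : r = z / (L * m)) :
    profileVelocity κ (dilate L m f) z =
      profileVelocity κ f r / L - (m ^ 2 - 1) / (L * m ^ 2) *
        (deriv (deriv f) r / ((1 + (deriv f r) ^ 2) * (1 + (deriv f r / m) ^ 2)) +
          κ * deriv f r / r) := by
  have hz : z = L * m * r := by rw [hr]; field_simp
  simp only [profileVelocity, deriv_deriv_dilate hL, deriv_dilate hL, dilate, ← hr]
  generalize deriv (deriv f) r = q, deriv f r = p, f r = y
  have hcurv : q / (L * m ^ 2) / (1 + (p / m) ^ 2) = q / (1 + p ^ 2) / L -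
      (m ^ 2 - 1) / (L * m ^ 2) * (q / ((1 + p ^ 2) * (1 + (p / m) ^ 2))) := by
    have hp : 1 + p ^ 2 ≠ 0 := by positivity
    have hpm : m ^ 2 + p ^ 2 ≠ 0 := by positivity
    field_simp
    ring
  have hrot : p / m / z = p / r / L - (m ^ 2 - 1) / (L * m ^ 2) * (p / r) := by
    rw [hz]
    field_simp
    ring
  rw [hcurv, hrot]
  ring

end Dilation

lemma hasDerivAt_dilate_param {f L m : ℝ → ℝ} {f' L' m' t z r : ℝ}
    (hr : r = z / (L t * m t)) (hf : HasDerivAt f f' r)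
    (hL : HasDerivAt L L' t) (hm : HasDerivAt m m' t) (hL0 : L t ≠ 0) (hm0 : m t ≠ 0) :
    HasDerivAt (fun s => dilate (L s) (m s) f z)
      (L' * (f r - r * f') - L t / m t * m' * (r * f')) t := by
  have harg : HasDerivAt (fun s => z / (L s * m s)) (-r * (L' / L t + m' / m t)) t := by
    refine ((hasDerivAt_const t z).fun_div (hL.fun_mul hm) (mul_ne_zero hL0 hm0)).congr_deriv ?_
    rw [hr]
    field_simp
    ring
  refine (hL.fun_mul (hf.comp_of_eq t harg hr)).congr_deriv ?_
  rw [Function.comp_apply, ← hr]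
  field_simp
  ring

lemma hasDerivAt_rpow_one_div_one_sub {α : ℝ} (hα : α ≠ 1) {f : ℝ → ℝ} {f' t : ℝ}
    (hf : HasDerivAt f f' t) (hf0 : f t ≠ 0) :
    HasDerivAt (fun s => f s ^ (1 / (1 - α))) (f t ^ (α / (1 - α)) / (1 - α) * f') t := by
  have hα' : 1 - α ≠ 0 := sub_ne_zero.mpr hα.symm
  have hexp : 1 / (1 - α) - 1 = α / (1 - α) := by
    field_simp
    ring
  refine (hf.rpow_const (Or.inl hf0)).congr_deriv ?_
  rw [hexp]
  ring

theorem barrier_defect_identity_general {κ c τ z r L' m' : ℝ} {ψ L m : ℝ → ℝ}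
    (hψpos : ∀ r : ℝ, 0 < r → 0 < ψ r) (hψC2 : ContDiffOn ℝ 2 ψ (Ioi 0))
    (hODE : ∀ r : ℝ, 0 < r → profileVelocity κ ψ r = 0)
    (hL : HasDerivAt L L' τ) (hm : HasDerivAt m m' τ) (hL0 : 0 < L τ) (hm0 : 0 < m τ)
    (hz : 0 < z) (hr : r = z / (L τ * m τ)) :
    0 < dilate (L τ) (m τ) ψ z ∧
    deriv (fun s => dilate (L s) (m s) ψ z) τ -
        (profileVelocity κ (dilate (L τ) (m τ) ψ) z +
          c * (-(z * deriv (dilate (L τ) (m τ) ψ) z) + dilate (L τ) (m τ) ψ z)) =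
      (-c * L τ + L') * (ψ r - r * deriv ψ r) - L τ / m τ * m' * (r * deriv ψ r) +
      ((m τ) ^ 2 - 1) / (L τ * (m τ) ^ 2) *
        (deriv (deriv ψ) r / ((1 + (deriv ψ r) ^ 2) * (1 + (deriv ψ r / m τ) ^ 2)) +
          κ * deriv ψ r / r) := by
  have hr0 : 0 < r := hr ▸ div_pos hz (mul_pos hL0 hm0)
  refine ⟨mul_pos hL0 (hr ▸ hψpos r hr0), ?_⟩
  have hψ' : HasDerivAt ψ (deriv ψ r) r :=
    ((hψC2.contDiffAt (Ioi_mem_nhds hr0)).differentiableAt two_ne_zero).hasDerivAt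
  have htime := (hasDerivAt_dilate_param hr hψ' hL hm hL0.ne' hm0.ne').deriv
  have hspace := profileVelocity_dilate hL0.ne' hm0.ne' κ ψ hr
  have hdrift := dilate_sub_mul_deriv_dilate (m := m τ) hL0.ne' ψ z
  rw [← hr] at hdrift
  rw [htime, hspace, hODE r hr0, neg_add_eq_sub, hdrift]
  ring

/-- The defect identity for the time-dependent perturbation
`W(z,τ) = λ(τ)^(1/(1−α)) ψ̂(z/(λ(τ)^(1/(1−α)) μ(τ)))` of the minimal profile `ψ̂` as a
barrier for the type-II rescaled flow `∂_τ ŵ = ∂²_z ŵ/(1+(∂_z ŵ)²) + (n−1)(∂_z ŵ/z − 1/ŵ)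
+ ((1/2+σ)/(2στ))(−z ∂_z ŵ + ŵ)`. -/
theorem barrier_defect_identity (n : ℕ) (hn : 2 ≤ n)
    (α : ℝ) (hα : α < 1) (σ : ℝ) (hσ : 0 < σ)
    (ψ : ℝ → ℝ) (hψpos : ∀ r : ℝ, 0 < r → 0 < ψ r)
    (hψC2 : ContDiff ℝ 2 ψ)
    (hODE : ∀ r : ℝ, 0 < r →
      deriv (deriv ψ) r / (1 + (deriv ψ r) ^ 2) +
        ((n : ℝ) - 1) * (deriv ψ r / r - 1 / ψ r) = 0)
    (I : Set ℝ) (hI : I ⊆ Set.Ioi 0)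
    (lam mu : ℝ → ℝ)
    (hlam : ∀ τ ∈ I, 0 < lam τ) (hmu : ∀ τ ∈ I, 0 < mu τ)
    (hlamdiff : ∀ τ ∈ I, DifferentiableAt ℝ lam τ)
    (hmudiff : ∀ τ ∈ I, DifferentiableAt ℝ mu τ)
    (W : ℝ → ℝ → ℝ)
    (hW : ∀ z τ : ℝ, W z τ = (lam τ) ^ (1 / (1 - α)) *
      ψ (z / ((lam τ) ^ (1 / (1 - α)) * mu τ))) :
    ∀ τ ∈ I, ∀ z : ℝ, 0 < z →
      ∀ r : ℝ, r = z / ((lam τ) ^ (1 / (1 - α)) * mu τ) →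
        0 < W z τ ∧
        deriv (fun τ' : ℝ => W z τ') τ -
            (deriv (deriv (fun z' : ℝ => W z' τ)) z /
                (1 + (deriv (fun z' : ℝ => W z' τ) z) ^ 2) +
              ((n : ℝ) - 1) * (deriv (fun z' : ℝ => W z' τ) z / z - 1 / W z τ) +
              ((1 / 2 + σ) / (2 * σ * τ)) *
                (-(z * deriv (fun z' : ℝ => W z' τ) z) + W z τ)) =
          (-((1 / 2 + σ) / (2 * σ * τ)) * (lam τ) ^ (1 / (1 - α)) +
              ((lam τ) ^ (α / (1 - α)) / (1 - α)) * deriv lam τ) *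
            (ψ r - r * deriv ψ r) -
          ((lam τ) ^ (1 / (1 - α)) / mu τ) * deriv mu τ * (r * deriv ψ r) +
          ((mu τ) ^ 2 - 1) / ((lam τ) ^ (1 / (1 - α)) * (mu τ) ^ 2) *
            (deriv (deriv ψ) r /
                ((1 + (deriv ψ r) ^ 2) * (1 + (deriv ψ r / mu τ) ^ 2)) +
              ((n : ℝ) - 1) * deriv ψ r / r) := by
  intro τ hτ z hz r hr
  obtain rfl : W = fun z τ => dilate (lam τ ^ (1 / (1 - α))) (mu τ) ψ z := funext₂ hW
  exact barrier_defect_identity_general hψpos hψC2.contDiffOn hODE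
    (hasDerivAt_rpow_one_div_one_sub hα.ne (hlamdiff τ hτ).hasDerivAt (hlam τ hτ).ne')
    (hmudiff τ hτ).hasDerivAt (rpow_pos_of_pos (hlam τ hτ) _) (hmu τ hτ) hz hr
end
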